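/- arXiv:2104.11967 — 5 statements merged into one kernel-verified Lean document; each statement's English description precedes it below -/
import Mathlib

section
/- For every integer d ≥ 3, the constant C_d := ζ(d−1)·ζ(4d−2)/(ζ(d)·ζ(2d−2)) satisfies 1 < C_d < 1 + 2^{2−d}, where ζ is the Riemann zeta function. -/
/-!
Write `ζ(k) = 1 + T(k)` with `T(k) = ∑_{m ≥ 2} m⁻ᵏ`, and put `k = d - 1 ≥ 2`.

Upper bound: since `ζ(4d-2) ≤ ζ(2d-2)`, it suffices that `ζ(k) < (1 + 2^{1-k}) ζ(k+1)`. Now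
`T(k) - T(k+1) = ∑_{m ≥ 2} (m-1)/m^{k+1}`, and `(m-1)/m³ ≤ 1/(m(m+1))`, whose sum over `m ≥ 2`
telescopes to `1/2`; the remaining factor `m^{-(k-2)}` is at most `2^{-(k-2)}`. Hence
`T(k) - T(k+1) ≤ 2^{1-k}` (`zetaTail_sub_succ_le`), and `ζ(k+1) > 1` gives strictness.

Lower bound: comparing termwise, `T(k+1) ≤ T(k)/2` and `T(2k) ≤ T(k)/4`, and these together with
the previous estimate give `T(k) ≤ 1`. Therefore
`ζ(k+1) ζ(2k) ≤ (1 + T(k)/2)(1 + T(k)/4) ≤ 1 + T(k) = ζ(k) < ζ(k) ζ(4d-2)`.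
-/

/-- The tail `ζ(k) - 1 = ∑_{m ≥ 2} m⁻ᵏ` of the zeta series, indexed by `m = n + 2`. -/
noncomputable def zetaTail (k : ℕ) : ℝ := ∑' n : ℕ, 1 / ((n : ℝ) + 2) ^ k

lemma summable_zetaTail {k : ℕ} (hk : 2 ≤ k) :
    Summable fun n : ℕ => 1 / ((n : ℝ) + 2) ^ k := by
  have h := (summable_nat_add_iff 2).2 (Real.summable_one_div_nat_pow.2 (show 1 < k by omega))
  simpa using h

lemma riemannZeta_eq_one_add_zetaTail {k : ℕ} (hk : 2 ≤ k) :
    riemannZeta (k : ℂ) = ((1 + zetaTail k : ℝ) : ℂ) := by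
  have hs : Summable fun n : ℕ => 1 / (n : ℝ) ^ k :=
    Real.summable_one_div_nat_pow.2 (by omega)
  have h := hs.sum_add_tsum_nat_add 2
  have h0 : k ≠ 0 := by omega
  have h2 : (1 + zetaTail k : ℝ) = ∑' n : ℕ, 1 / (n : ℝ) ^ k := by
    rw [← h]
    simp [Finset.sum_range_succ, h0, zetaTail]
  rw [zeta_nat_eq_tsum_of_gt_one (by omega), h2]
  push_cast
  rfl

lemma zetaTail_pos {k : ℕ} (hk : 2 ≤ k) : 0 < zetaTail k :=
  (summable_zetaTail hk).tsum_pos (fun n => by positivity) 0 (by positivity)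

/-- Each term of `T(k + j)` is the corresponding term of `T(k)` times `m⁻ʲ ≤ 2⁻ʲ`. -/
lemma zetaTail_add_le {k : ℕ} (hk : 2 ≤ k) (j : ℕ) :
    zetaTail (k + j) ≤ (1 / 2) ^ j * zetaTail k := by
  unfold zetaTail
  rw [← tsum_mul_left]
  refine (summable_zetaTail (by omega)).tsum_le_tsum (fun n => ?_)
    ((summable_zetaTail hk).mul_left _)
  have h2 : (2 : ℝ) ^ j ≤ ((n : ℝ) + 2) ^ j := by
    gcongr
    linarith [(Nat.cast_nonneg n : (0 : ℝ) ≤ n)]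
  rw [div_pow, one_pow, div_mul_div_comm, one_mul, pow_add, mul_comm]
  gcongr

lemma hasSum_telescope :
    HasSum (fun n : ℕ => 1 / ((n : ℝ) + 2) - 1 / ((n : ℝ) + 3)) (1 / 2) := by
  have hnn : ∀ n : ℕ, 0 ≤ 1 / ((n : ℝ) + 2) - 1 / ((n : ℝ) + 3) := fun n => by
    rw [sub_nonneg]
    gcongr
    norm_num
  rw [hasSum_iff_tendsto_nat_of_nonneg hnn]
  have hsum : ∀ N : ℕ, ∑ n ∈ Finset.range N, (1 / ((n : ℝ) + 2) - 1 / ((n : ℝ) + 3))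
      = 1 / 2 - 1 / ((N : ℝ) + 2) := fun N => by
    induction N with
    | zero => simp
    | succ N ih =>
      rw [Finset.sum_range_succ, ih]
      push_cast
      ring
  simp only [hsum]
  have h := tendsto_const_div_atTop_nhds_zero_nat (1 : ℝ)
  have h' := (Filter.tendsto_add_atTop_iff_nat 2).2 h
  simpa using h'.const_sub (1 / 2 : ℝ)

lemma zetaTail_sub_succ_le (j : ℕ) :
    zetaTail (j + 2) - zetaTail (j + 3) ≤ (1 / 2) ^ (j + 1) := by
  have hs := (summable_zetaTail (show 2 ≤ j + 2 by omega)).sub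
    (summable_zetaTail (show 2 ≤ j + 3 by omega))
  have ht := hasSum_telescope.mul_left ((1 / 2 : ℝ) ^ j)
  unfold zetaTail
  rw [← (summable_zetaTail (show 2 ≤ j + 2 by omega)).tsum_sub
    (summable_zetaTail (show 2 ≤ j + 3 by omega)), pow_succ, ← ht.tsum_eq]
  refine hs.tsum_le_tsum (fun n => ?_) ht.summable
  have hn : (0 : ℝ) ≤ n := Nat.cast_nonneg n
  have h2 : 1 / ((n : ℝ) + 2) ^ j ≤ (1 / 2) ^ j := by
    rw [div_pow, one_pow]
    gcongr
    linarith
  -- With `m = n + 2`, this is `(m - 1) / m³ ≤ 1 / (m (m + 1))`, i.e. `m² - 1 ≤ m²`.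
  have h3 : ((n : ℝ) + 1) / ((n : ℝ) + 2) ^ 3 ≤ 1 / ((n : ℝ) + 2) - 1 / ((n : ℝ) + 3) := by
    rw [div_sub_div _ _ (by positivity) (by positivity), div_le_div_iff₀ (by positivity)
      (by positivity)]
    nlinarith [mul_nonneg hn hn]
  calc 1 / ((n : ℝ) + 2) ^ (j + 2) - 1 / ((n : ℝ) + 2) ^ (j + 3)
      = 1 / ((n : ℝ) + 2) ^ j * (((n : ℝ) + 1) / ((n : ℝ) + 2) ^ 3) := by
        field_simp
        ring
    _ ≤ _ := mul_le_mul h2 h3 (by positivity) (by positivity)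

theorem statement1 (d : ℕ) (hd : 3 ≤ d) (C : ℝ)
    (hC : (C : ℂ) = riemannZeta ((d : ℂ) - 1) * riemannZeta (4 * (d : ℂ) - 2) /
        (riemannZeta (d : ℂ) * riemannZeta (2 * (d : ℂ) - 2))) :
    1 < C ∧ C < 1 + (2 : ℝ) ^ ((2 : ℤ) - (d : ℤ)) := by
  obtain ⟨j, rfl⟩ : ∃ j, d = j + 3 := ⟨d - 3, by omega⟩
  have e1 : (((j + 3 : ℕ) : ℂ) - 1) = ((j + 2 : ℕ) : ℂ) := by push_cast; ring
  have e2 : (4 * ((j + 3 : ℕ) : ℂ) - 2) = ((4 * j + 10 : ℕ) : ℂ) := by push_cast; ring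
  have e3 : (2 * ((j + 3 : ℕ) : ℂ) - 2) = ((2 * j + 4 : ℕ) : ℂ) := by push_cast; ring
  have e4 : (2 : ℝ) ^ ((2 : ℤ) - ((j + 3 : ℕ) : ℤ)) = (1 / 2) ^ (j + 1) := by
    rw [show (2 : ℤ) - ((j + 3 : ℕ) : ℤ) = -((j + 1 : ℕ) : ℤ) by push_cast; ring, zpow_neg,
      zpow_natCast, one_div, inv_pow]
  rw [e1, e2, e3, riemannZeta_eq_one_add_zetaTail (by omega),
    riemannZeta_eq_one_add_zetaTail (by omega), riemannZeta_eq_one_add_zetaTail (by omega),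
    riemannZeta_eq_one_add_zetaTail (by omega)] at hC
  norm_cast at hC
  rw [e4, hC]
  have ha := zetaTail_pos (show 2 ≤ j + 2 by omega)
  have hb := zetaTail_pos (show 2 ≤ j + 3 by omega)
  have hc := zetaTail_pos (show 2 ≤ 2 * j + 4 by omega)
  have hf := zetaTail_pos (show 2 ≤ 4 * j + 10 by omega)
  have hba := zetaTail_add_le (show 2 ≤ j + 2 by omega) 1
  have hca := zetaTail_add_le (show 2 ≤ j + 2 by omega) (j + 2)
  have hfc := zetaTail_add_le (show 2 ≤ 2 * j + 4 by omega) (2 * j + 6)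
  have hab := zetaTail_sub_succ_le j
  rw [show j + 2 + 1 = j + 3 by ring] at hba
  rw [show j + 2 + (j + 2) = 2 * j + 4 by ring] at hca
  rw [show 2 * j + 4 + (2 * j + 6) = 4 * j + 10 by ring] at hfc
  have hp : (1 / 2 : ℝ) ^ j ≤ 1 := pow_le_one₀ (by norm_num) (by norm_num)
  have hq : (1 / 2 : ℝ) ^ (2 * j + 6) ≤ 1 := pow_le_one₀ (by norm_num) (by norm_num)
  have hp0 : 0 < (1 / 2 : ℝ) ^ j := by positivity
  rw [pow_add] at hca
  rw [pow_succ] at hab ⊢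
  generalize zetaTail (j + 2) = a at *
  generalize zetaTail (j + 3) = b at *
  generalize zetaTail (2 * j + 4) = c at *
  generalize zetaTail (4 * j + 10) = f at *
  generalize (1 / 2 : ℝ) ^ j = p at *
  have hc4 : c ≤ a / 4 := by nlinarith
  have hfc' : f ≤ c := by nlinarith
  have ha1 : a ≤ 1 := by linarith
  constructor
  · rw [one_lt_div (by positivity)]
    calc (1 + b) * (1 + c) ≤ (1 + a / 2) * (1 + a / 4) := by gcongr; linarith
      _ ≤ 1 + a := by nlinarith
      _ < (1 + a) * (1 + f) := by nlinarith
  · rw [div_lt_iff₀ (by positivity), ← mul_assoc]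
    calc (1 + a) * (1 + f) ≤ (1 + a) * (1 + c) := by gcongr
      _ < _ := by
        refine mul_lt_mul_of_pos_right ?_ (by positivity)
        nlinarith [mul_pos hp0 hb]
end

section
/- Let d ≥ 2, N ∈ {2,3,4}, and let α be an N×N irreducible skew-symmetric matrix with entries in {−1,0,1} and α_{1N} = 1. Then for every R ≥ 1, every real L ≥ 2, and every pair (z₁,v) ∈ (Z_L^d)² with z₁·v = 0, z₁ ≠ 0, v ≠ 0 and |(z₁,v)|_∞ < (N−1)R, the number of points of Q̃_L(z₁,v) lying in the open cube B_R^{(N−2)d} is at most 2^{(N−2)d}·(NRL)^{(N−2)(d−1)}. -/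
/-!
The count uses only that each coordinate of a lattice point in the cube lies in a finite set `S` of
at most `2RL + 1` reals. Put `M = |S|`.

For `N = 3` the single equation is `z · (a z₁ + b v + a b z) = 0`. Irreducibility gives
`(a, b) ≠ 0`, and `z₁`, `v` are independent because they are orthogonal and nonzero, so this is a
hyperplane or a sphere: some coordinate satisfies a nontrivial quadratic equation once the others
are fixed (`card_quadric_le`), leaving at most `2 M^(d-1)` points.

For `N = 4` the equations, for `x = z₂` and `y = z₃`, have the form
`x · (u + A x + g y) = 0` and `y · (w + h x + B y) = 0`. Irreducibility says that
`g = 0` forces `u ≠ 0`, that `h = 0` forces `w ≠ 0`, and that `u`, `w` are not both zero.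
* If `g = 0` (or, symmetrically, `h = 0`), the first equation is a quadric in `x` alone, and for
  all but at most one `x` the second is a nondegenerate quadric in `y`
  (`card_system_le_of_decoupled`).
* If `g, h ≠ 0`, then for fixed `x ≠ 0` the first equation prescribes `x · y`. The second one
  cuts this hyperplane properly, leaving `2 M^(d-2)` values of `y`
  (`card_quadric_inter_le`), unless `B = 0` and `w` is a multiple of `x`. If `w ≠ 0` there are at
  most `M` such nonzero `x`; if `w = 0`, the equations give `x · y = 0` and a quadric for `x` alone
  (`card_system_le_of_coupled`).

In all cases there are at most `5 M^(2(d-1))` pairs, which is below the asserted bound since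
`RL ≥ 2` gives `M ≤ 4RL`.
-/

open MeasureTheory Real

noncomputable section

abbrev Ed (d : ℕ) := EuclideanSpace ℝ (Fin d)

/-- the index `j+1 ∈ {2,…,N-1}` (1-based) of a middle variable, as an element of `Fin N`. -/
def embIdx (N : ℕ) (j : Fin (N - 2)) : Fin N := ⟨j.1 + 1, by have := j.2; omega⟩
/-- the first index (1-based index `1`). -/
def oneIdx (N : ℕ) (j : Fin (N - 2)) : Fin N := ⟨0, by have := j.2; omega⟩
/-- the last index (1-based index `N`). -/
def lastIdx (N : ℕ) (j : Fin (N - 2)) : Fin N := ⟨N - 1, by have := j.2; omega⟩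

/-- the polynomial `q_j(z₂,…,z_{N-1}; z₁, v)`. -/
def qpoly {d N : ℕ} (α : Matrix (Fin N) (Fin N) ℤ) (z₁ v : Ed d)
    (w : Fin (N - 2) → Ed d) (j : Fin (N - 2)) : ℝ :=
  ∑ i, w j i *
    ((α (embIdx N j) (oneIdx N j) : ℝ) * z₁ i + (α (embIdx N j) (lastIdx N j) : ℝ) * v i +
      ∑ m : Fin (N - 2), ((α (embIdx N j) (embIdx N m) : ℝ) -
        (α (embIdx N j) (lastIdx N j) : ℝ) * (α (oneIdx N j) (embIdx N m) : ℝ)) * w m i)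

/-- irreducibility of a matrix: it cannot be brought by one and the same permutation of rows and
columns to a block-diagonal form with more than one block. -/
def IrredMat {N : ℕ} (α : Matrix (Fin N) (Fin N) ℤ) : Prop :=
  ∀ I : Finset (Fin N), I.Nonempty → I ≠ Finset.univ → ∃ i ∈ I, ∃ j ∈ Iᶜ, α i j ≠ 0

/-- the set `Q̃_L(z₁,v) ∩ B_R^{(N-2)d}`. -/
def QtildeSet {d N : ℕ} (α : Matrix (Fin N) (Fin N) ℤ) (L : ℝ) (z₁ v : Ed d) (R : ℝ) :
    Set (Fin (N - 2) → Ed d) :=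
  {w | (∀ j i, ∃ c : ℤ, w j i = (c : ℝ) / L) ∧ (∀ j, qpoly α z₁ v w j = 0) ∧ ∀ j i, |w j i| < R}

/-! ### Counting on fibres -/

/-- The grid of vectors all of whose coordinates lie in `S`. -/
def grid (d : ℕ) (S : Finset ℝ) : Finset (Fin d → ℝ) := Fintype.piFinset fun _ => S

lemma card_grid (d : ℕ) (S : Finset ℝ) : (grid d S).card = S.card ^ d := by
  simp [grid]

open Classical in
/-- A set of grid points whose fibres over the coordinates outside `T` have at most `k` points has
at most `k * |S| ^ (d - |T|)` points. -/
lemma card_le_of_fibers {d : ℕ} (S : Finset ℝ) (T : Finset (Fin d)) (F : Finset (Fin d → ℝ))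
    (hF : F ⊆ grid d S) (k : ℕ)
    (h : ∀ y₀ ∈ F, (F.filter fun y => ∀ i ∉ T, y i = y₀ i).card ≤ k) :
    F.card ≤ k * S.card ^ (d - T.card) := by
  let r : (Fin d → ℝ) → ({i // i ∉ T} → ℝ) := fun y i => y i
  have hmaps : ∀ y ∈ F, r y ∈ Fintype.piFinset (fun _ : {i // i ∉ T} => S) := by
    intro y hy
    have := hF hy
    simp only [grid, Fintype.mem_piFinset] at this ⊢
    exact fun i => this i
  have hcard : (Fintype.piFinset (fun _ : {i // i ∉ T} => S)).card = S.card ^ (d - T.card) := by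
    rw [Fintype.card_piFinset, Finset.prod_const, Finset.card_univ, Fintype.card_subtype_compl]
    simp
  rw [← hcard]
  refine Finset.card_le_mul_card_image_of_maps_to hmaps k fun b _ => ?_
  by_cases hb : ∃ y₀ ∈ F, r y₀ = b
  · obtain ⟨y₀, hy₀, rfl⟩ := hb
    refine (Finset.card_le_card fun y hy => ?_).trans (h y₀ hy₀)
    rw [Finset.mem_filter] at hy ⊢
    exact ⟨hy.1, fun i hi => congrFun hy.2 ⟨i, hi⟩⟩
  · rw [Finset.filter_false_of_mem (fun y hy hyb => hb ⟨y, hy, hyb⟩)]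
    simp

open Classical in
lemma card_pairs_le {V : Type*} (G : Finset (V × V)) (X : Finset V) (m k : ℕ) (hX : X.card ≤ m)
    (hG : ∀ p ∈ G, p.1 ∈ X)
    (hY : ∀ x ∈ X, ∃ Y : Finset V, Y.card ≤ k ∧ ∀ y, (x, y) ∈ G → y ∈ Y) : G.card ≤ m * k := by
  have := Finset.card_le_mul_card_image_of_maps_to (f := Prod.fst) (s := G) (t := X) hG k ?_
  · calc G.card ≤ k * X.card := this
      _ ≤ k * m := Nat.mul_le_mul_left _ hX
      _ = m * k := mul_comm _ _
  · intro x hx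
    obtain ⟨Y, hYk, hY⟩ := hY x hx
    refine le_trans ?_ hYk
    refine Finset.card_le_card_of_injOn Prod.snd ?_ ?_
    · rintro ⟨a, y⟩ hp
      simp only [Finset.coe_filter, Set.mem_ofPred_eq] at hp
      obtain ⟨hp, rfl⟩ := hp
      exact hY _ hp
    · rintro ⟨a, y⟩ hp ⟨a', y'⟩ hp' hyy
      simp only [Finset.coe_filter, Set.mem_ofPred_eq] at hp hp'
      exact Prod.ext (hp.2.trans hp'.2.symm) hyy

/-! ### Spheres and hyperplanes in a grid -/

/-- A line in direction `n` meets the quadric `p·y + l |y|² = κ` in at most two points, unless the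
quadratic polynomial is degenerate along `n`. -/
lemma card_line_le_two {d : ℕ} (F : Finset (Fin d → ℝ)) (n p : Fin d → ℝ) (l κ : ℝ)
    (hn : n ≠ 0) (hline : ∀ y ∈ F, ∀ y' ∈ F, ∃ t : ℝ, y' = y + t • n)
    (hq : ∀ y ∈ F, p ⬝ᵥ y + l * (y ⬝ᵥ y) = κ) (hnd : l ≠ 0 ∨ p ⬝ᵥ n ≠ 0) : F.card ≤ 2 := by
  by_contra hlt
  obtain ⟨a, ha, b, hb, c, hc, hab, hac, hbc⟩ := Finset.two_lt_card.1 (not_le.1 hlt)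
  obtain ⟨t, rfl⟩ := hline a ha b hb
  obtain ⟨s, rfl⟩ := hline a ha c hc
  have ht : t ≠ 0 := by rintro rfl; simp at hab
  have hs : s ≠ 0 := by rintro rfl; simp at hac
  have hts : t - s ≠ 0 := by
    intro h
    rw [sub_eq_zero.1 h] at hbc
    exact hbc rfl
  have hnn : n ⬝ᵥ n ≠ 0 := fun h => hn (dotProduct_self_eq_zero.1 h)
  have h0 := hq _ ha
  -- the chord equation obtained by subtracting the values at two points of the line
  have key : ∀ t : ℝ, t ≠ 0 → p ⬝ᵥ (a + t • n) + l * ((a + t • n) ⬝ᵥ (a + t • n)) = κ →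
      p ⬝ᵥ n + 2 * l * (a ⬝ᵥ n) + l * t * (n ⬝ᵥ n) = 0 := by
    intro t ht h
    simp only [dotProduct_add, add_dotProduct, dotProduct_smul, smul_dotProduct, smul_eq_mul] at h
    rw [dotProduct_comm n a] at h
    apply mul_left_cancel₀ ht
    linear_combination h - h0
  have h1 := key t ht (hq _ hb)
  have h2 := key s hs (hq _ hc)
  have hl : l = 0 := by
    have : l * ((t - s) * (n ⬝ᵥ n)) = 0 := by linear_combination h1 - h2
    exact (mul_eq_zero.1 this).resolve_right (mul_ne_zero hts hnn)
  subst hl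
  rcases hnd with h | h
  · exact h rfl
  · exact h (by linear_combination h1)

open Classical in
lemma card_quadric_le {d : ℕ} (hd : 0 < d) (S : Finset ℝ) (p : Fin d → ℝ) (l κ : ℝ)
    (hnd : l ≠ 0 ∨ p ≠ 0) :
    ((grid d S).filter fun y => p ⬝ᵥ y + l * (y ⬝ᵥ y) = κ).card ≤ 2 * S.card ^ (d - 1) := by
  obtain ⟨i, hi⟩ : ∃ i, l ≠ 0 ∨ p i ≠ 0 := by
    rcases hnd with h | h
    · exact ⟨⟨0, hd⟩, Or.inl h⟩
    · obtain ⟨i, hi⟩ := Function.ne_iff.1 h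
      exact ⟨i, Or.inr hi⟩
  refine card_le_of_fibers S {i} _ (Finset.filter_subset _ _) 2 fun y₀ _ => ?_
  refine card_line_le_two _ (Pi.single i 1) p l κ ?_ ?_ ?_ ?_
  · intro h
    simpa using congrFun h i
  · intro y hy y' hy'
    simp only [Finset.mem_filter, Finset.mem_singleton] at hy hy'
    refine ⟨y' i - y i, funext fun k => ?_⟩
    by_cases hk : k = i
    · subst hk; simp
    · simp [hk, hy.2 k hk, hy'.2 k hk]
  · intro y hy
    simp only [Finset.mem_filter] at hy
    exact hy.1.2
  · simpa using hi

open Classical in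
/-- Two independent conditions, a hyperplane with normal `x` and a quadric which stays
nondegenerate on that hyperplane, lower the number of free coordinates by two. -/
lemma card_quadric_inter_le {d : ℕ} (hd : 2 ≤ d) (S : Finset ℝ) (x p : Fin d → ℝ) (l κ κ' : ℝ)
    (hx : x ≠ 0) (hnd : l ≠ 0 ∨ ∀ s : ℝ, p ≠ s • x) :
    ((grid d S).filter fun y => x ⬝ᵥ y = κ' ∧ p ⬝ᵥ y + l * (y ⬝ᵥ y) = κ).card
      ≤ 2 * S.card ^ (d - 2) := by
  obtain ⟨i, hi⟩ := Function.ne_iff.1 hx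
  simp only [Pi.zero_apply] at hi
  obtain ⟨j, hji, hj⟩ : ∃ j, j ≠ i ∧ (l ≠ 0 ∨ p j * x i - p i * x j ≠ 0) := by
    rcases hnd with h | h
    · have : Nontrivial (Fin d) := Fin.nontrivial_iff_two_le.2 hd
      obtain ⟨j, hj⟩ := exists_ne i
      exact ⟨j, hj, Or.inl h⟩
    · by_contra! hcon
      refine h (p i / x i) (funext fun j => ?_)
      simp only [Pi.smul_apply, smul_eq_mul]
      by_cases hji : j = i
      · subst hji; field_simp
      · have := (hcon j hji).2
        field_simp
        linarith
  have hT : ({i, j} : Finset (Fin d)).card = 2 := Finset.card_pair hji.symm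
  rw [← hT]
  refine card_le_of_fibers S {i, j} _ (Finset.filter_subset _ _) _ fun y₀ _ => ?_
  rw [hT]
  refine card_line_le_two _ (x i • Pi.single j 1 - x j • Pi.single i 1) p l κ ?_ ?_ ?_ ?_
  · intro h
    have := congrFun h j
    simp [hji] at this
    exact hi this
  · intro y hy y' hy'
    simp only [Finset.mem_filter, Finset.mem_insert, Finset.mem_singleton, not_or] at hy hy'
    refine ⟨(y' j - y j) / x i, ?_⟩
    have hoff : ∀ k, k ≠ i → k ≠ j → y' k = y k := fun k h1 h2 =>
      (hy'.2 k ⟨h1, h2⟩).trans (hy.2 k ⟨h1, h2⟩).symm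
    have hdiff : x i * (y' i - y i) + x j * (y' j - y j) = 0 := by
      have h1 : x ⬝ᵥ (y' - y) = 0 := by rw [dotProduct_sub, hy'.1.2.1, hy.1.2.1, sub_self]
      rw [dotProduct, ← Finset.sum_subset (Finset.subset_univ {i, j}),
        Finset.sum_pair hji.symm] at h1
      · exact h1
      · intro k _ hk
        simp only [Finset.mem_insert, Finset.mem_singleton, not_or] at hk
        simp [hoff k hk.1 hk.2]
    funext k
    by_cases hki : k = i
    · subst hki
      simp [hji.symm]
      field_simp
      linarith
    · by_cases hkj : k = j
      · subst hkj
        simp [hki]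
        field_simp
        ring
      · simp [hki, hkj, hoff k hki hkj]
  · intro y hy
    simp only [Finset.mem_filter] at hy
    exact hy.1.2.2
  · rcases hj with h | h
    · exact Or.inl h
    · right
      simp only [dotProduct_sub, dotProduct_smul, dotProduct_single, mul_one, smul_eq_mul]
      intro h'
      exact h (by linear_combination h')

open Classical in
/-- A line through the origin meets the grid in at most `|S|` points. -/
lemma card_multiples_le {d : ℕ} (S : Finset ℝ) (w : Fin d → ℝ) (hw : w ≠ 0) :
    ((grid d S).filter fun x => ∃ t : ℝ, x = t • w).card ≤ S.card := by
  obtain ⟨i, hi⟩ := Function.ne_iff.1 hw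
  simp only [Pi.zero_apply] at hi
  refine Finset.card_le_card_of_injOn (fun x => x i) ?_ ?_
  · intro x hx
    simp only [grid, Finset.coe_filter, Set.mem_ofPred_eq, Fintype.mem_piFinset] at hx
    exact hx.1 i
  · intro x hx y hy hxy
    simp only [Finset.coe_filter, Set.mem_ofPred_eq] at hx hy
    obtain ⟨-, t, rfl⟩ := hx
    obtain ⟨-, s, rfl⟩ := hy
    simp only [Pi.smul_apply, smul_eq_mul] at hxy
    rw [mul_right_cancel₀ hi hxy]

/-! ### The coupled system of two equations -/

lemma card_split {V : Type*} (G : Finset V) (Q : V → Prop) [DecidablePred Q]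
    [DecidablePred fun p => ¬ Q p] (a b : ℕ)
    (ha : (G.filter Q).card ≤ a) (hb : (G.filter fun p => ¬ Q p).card ≤ b) : G.card ≤ a + b := by
  rw [← Finset.card_filter_add_card_filter_not (s := G) Q]
  exact Nat.add_le_add ha hb

lemma pow_self_le {M d : ℕ} (hd : 2 ≤ d) (hM : 1 ≤ M) : M ^ d ≤ M ^ (2 * (d - 1)) :=
  Nat.pow_le_pow_right hM (by omega)

open Classical in
/-- If the first equation does not involve `y` and is nondegenerate, it leaves `2 |S|^(d-1)` values
of `x`; for all of them but the possible solution of `w + h x = 0`, the second equation leaves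
`2 |S|^(d-1)` values of `y`. -/
lemma card_system_le_of_decoupled {d : ℕ} (hd : 2 ≤ d) (S : Finset ℝ) (hM : 1 ≤ S.card)
    (u w : Fin d → ℝ) (A B h : ℝ) (hu : u ≠ 0) (hw : h = 0 → w ≠ 0)
    (G : Finset ((Fin d → ℝ) × (Fin d → ℝ)))
    (hG : ∀ x y, (x, y) ∈ G → x ∈ grid d S ∧ y ∈ grid d S ∧ u ⬝ᵥ x + A * (x ⬝ᵥ x) = 0 ∧
      w ⬝ᵥ y + h * (x ⬝ᵥ y) + B * (y ⬝ᵥ y) = 0) :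
    G.card ≤ 5 * S.card ^ (2 * (d - 1)) := by
  have h1 : (G.filter fun p => w + h • p.1 = 0).card ≤ 1 * S.card ^ d := by
    refine card_pairs_le _ ((grid d S).filter fun x => w + h • x = 0) _ _ ?_ ?_ ?_
    · refine Finset.card_le_one.2 fun x hx x' hx' => ?_
      have e := (Finset.mem_filter.1 hx).2
      have e' := (Finset.mem_filter.1 hx').2
      have hh : h ≠ 0 := fun h0 => hw h0 (by simpa [h0] using e)
      exact smul_right_injective _ hh (add_left_cancel (e.trans e'.symm))
    · rintro ⟨x, y⟩ hp
      rw [Finset.mem_filter] at hp ⊢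
      exact ⟨(hG x y hp.1).1, hp.2⟩
    · intro x _
      exact ⟨grid d S, (card_grid d S).le, fun y hy => (hG x y (Finset.mem_filter.1 hy).1).2.1⟩
  have h2 : (G.filter fun p => ¬ w + h • p.1 = 0).card
      ≤ (2 * S.card ^ (d - 1)) * (2 * S.card ^ (d - 1)) := by
    refine card_pairs_le _ (((grid d S).filter fun x => u ⬝ᵥ x + A * (x ⬝ᵥ x) = 0).filter
      fun x => ¬ w + h • x = 0) _ _ ?_ ?_ ?_
    · exact (Finset.card_le_card (Finset.filter_subset _ _)).trans
        (card_quadric_le (by omega) S u A 0 (Or.inr hu))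
    · rintro ⟨x, y⟩ hp
      rw [Finset.mem_filter] at hp
      rw [Finset.mem_filter, Finset.mem_filter]
      exact ⟨⟨(hG x y hp.1).1, (hG x y hp.1).2.2.1⟩, hp.2⟩
    · intro x hx
      refine ⟨_, card_quadric_le (by omega) S (w + h • x) B 0
        (Or.inr (Finset.mem_filter.1 hx).2), fun y hy => ?_⟩
      obtain ⟨-, hy1, -, hy2⟩ := hG x y (Finset.mem_filter.1 hy).1
      refine Finset.mem_filter.2 ⟨hy1, ?_⟩
      rw [add_dotProduct, smul_dotProduct, smul_eq_mul, hy2]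
  have h3 := card_split G _ _ _ h1 h2
  have h4 := pow_self_le hd hM
  have h5 : S.card ^ (d - 1) * S.card ^ (d - 1) = S.card ^ (2 * (d - 1)) := by
    rw [← pow_add]; congr 1; omega
  rw [mul_mul_mul_comm, h5] at h3
  linarith

open Classical in
/-- When both equations involve the product `x·y`, the first is, for fixed `x ≠ 0`, a hyperplane
in `y`, and the second cuts it in two conditions unless the two are parallel. -/
lemma card_system_le_of_coupled {d : ℕ} (hd : 2 ≤ d) (S : Finset ℝ) (hM : 1 ≤ S.card)
    (u w : Fin d → ℝ) (A B g h : ℝ) (hg : g ≠ 0) (hh : h ≠ 0) (huw : B = 0 → w = 0 → u ≠ 0)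
    (G : Finset ((Fin d → ℝ) × (Fin d → ℝ)))
    (hG : ∀ x y, (x, y) ∈ G → x ∈ grid d S ∧ y ∈ grid d S ∧
      u ⬝ᵥ x + g * (x ⬝ᵥ y) + A * (x ⬝ᵥ x) = 0 ∧
      w ⬝ᵥ y + h * (x ⬝ᵥ y) + B * (y ⬝ᵥ y) = 0) :
    G.card ≤ 5 * S.card ^ (2 * (d - 1)) := by
  have h4 := pow_self_le hd hM
  have h5 : S.card ^ (d - 1) * S.card ^ (d - 1) = S.card ^ (2 * (d - 1)) := by
    rw [← pow_add]; congr 1; omega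
  have h6 : S.card ^ d * S.card ^ (d - 2) = S.card ^ (2 * (d - 1)) := by
    rw [← pow_add]; congr 1; omega
  have h7 : S.card * S.card ^ (d - 1) = S.card ^ d := by
    rw [← pow_succ']; congr 1; omega
  have hplane : ∀ x y, (x, y) ∈ G → x ⬝ᵥ y = -(u ⬝ᵥ x + A * (x ⬝ᵥ x)) / g := by
    intro x y hxy
    rw [eq_div_iff hg]
    linear_combination (hG x y hxy).2.2.1
  have hzero : (G.filter fun p => p.1 = 0).card ≤ 1 * S.card ^ d := by
    refine card_pairs_le _ {0} _ _ (by simp) ?_ ?_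
    · rintro ⟨x, y⟩ hp
      simpa using (Finset.mem_filter.1 hp).2
    · intro x _
      exact ⟨grid d S, (card_grid d S).le, fun y hy => (hG x y (Finset.mem_filter.1 hy).1).2.1⟩
  -- for a nonzero `x` the hyperplane alone leaves at most `2 |S|^(d-1)` values of `y`
  have hyper : ∀ x : Fin d → ℝ, x ≠ 0 → ∃ Y : Finset (Fin d → ℝ),
      Y.card ≤ 2 * S.card ^ (d - 1) ∧ ∀ y, (x, y) ∈ G → y ∈ Y := by
    intro x hx
    refine ⟨_, card_quadric_le (by omega) S x 0 (-(u ⬝ᵥ x + A * (x ⬝ᵥ x)) / g) (Or.inr hx),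
      fun y hy => Finset.mem_filter.2 ⟨(hG x y hy).2.1, ?_⟩⟩
    rw [hplane x y hy]
    ring
  have hboth : ∀ x : Fin d → ℝ, x ≠ 0 → (B ≠ 0 ∨ ∀ s : ℝ, w ≠ s • x) →
      ∃ Y : Finset (Fin d → ℝ),
      Y.card ≤ 2 * S.card ^ (d - 2) ∧ ∀ y, (x, y) ∈ G → y ∈ Y := by
    intro x hx hnd
    refine ⟨_, card_quadric_inter_le hd S x w B
      (-h * (-(u ⬝ᵥ x + A * (x ⬝ᵥ x)) / g)) (-(u ⬝ᵥ x + A * (x ⬝ᵥ x)) / g) hx hnd,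
      fun y hy => Finset.mem_filter.2 ⟨(hG x y hy).2.1, hplane x y hy, ?_⟩⟩
    rw [← hplane x y hy]
    linear_combination (hG x y hy).2.2.2
  by_cases hB : B = 0
  · by_cases hw : w = 0
    · -- the second equation is `x·y = 0`, so the first becomes an equation in `x` alone
      have hu := huw hB hw
      have hrest : (G.filter fun p => ¬ p.1 = 0).card
          ≤ (2 * S.card ^ (d - 1)) * (2 * S.card ^ (d - 1)) := by
        refine card_pairs_le _ (((grid d S).filter fun x => u ⬝ᵥ x + A * (x ⬝ᵥ x) = 0).filter
          fun x => ¬ x = 0) _ _ ?_ ?_ ?_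
        · exact (Finset.card_le_card (Finset.filter_subset _ _)).trans
            (card_quadric_le (by omega) S u A 0 (Or.inr hu))
        · rintro ⟨x, y⟩ hp
          rw [Finset.mem_filter] at hp
          obtain ⟨hx, -, e1, e2⟩ := hG x y hp.1
          have hxy : x ⬝ᵥ y = 0 := by simpa [hB, hw, hh] using e2
          rw [Finset.mem_filter, Finset.mem_filter]
          exact ⟨⟨hx, by simpa [hxy] using e1⟩, hp.2⟩
        · intro x hx
          obtain ⟨Y, hY, hY'⟩ := hyper x (Finset.mem_filter.1 hx).2
          exact ⟨Y, hY, fun y hy => hY' y (Finset.mem_filter.1 hy).1⟩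
      have := card_split G _ _ _ hzero hrest
      rw [mul_mul_mul_comm, h5] at this
      linarith
    · have hpar : ((G.filter fun p => ¬ p.1 = 0).filter fun p => ∃ t : ℝ, p.1 = t • w).card
          ≤ S.card * (2 * S.card ^ (d - 1)) := by
        refine card_pairs_le _ (((grid d S).filter fun x => ∃ t : ℝ, x = t • w).filter
          fun x => ¬ x = 0) _ _ ?_ ?_ ?_
        · exact (Finset.card_le_card (Finset.filter_subset _ _)).trans (card_multiples_le S w hw)
        · rintro ⟨x, y⟩ hp
          rw [Finset.mem_filter, Finset.mem_filter] at hp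
          rw [Finset.mem_filter, Finset.mem_filter]
          exact ⟨⟨(hG x y hp.1.1).1, hp.2⟩, hp.1.2⟩
        · intro x hx
          obtain ⟨Y, hY, hY'⟩ := hyper x (Finset.mem_filter.1 hx).2
          exact ⟨Y, hY, fun y hy => hY' y
            (Finset.mem_filter.1 (Finset.mem_filter.1 hy).1).1⟩
      have hgen : ((G.filter fun p => ¬ p.1 = 0).filter fun p => ¬ ∃ t : ℝ, p.1 = t • w).card
          ≤ S.card ^ d * (2 * S.card ^ (d - 2)) := by
        refine card_pairs_le _ ((grid d S).filter fun x => ¬ x = 0 ∧ ¬ ∃ t : ℝ, x = t • w)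
          _ _ ?_ ?_ ?_
        · exact (Finset.card_le_card (Finset.filter_subset _ _)).trans (card_grid d S).le
        · rintro ⟨x, y⟩ hp
          rw [Finset.mem_filter, Finset.mem_filter] at hp
          rw [Finset.mem_filter]
          exact ⟨(hG x y hp.1.1).1, hp.1.2, hp.2⟩
        · intro x hx
          obtain ⟨-, hx0, hxw⟩ := Finset.mem_filter.1 hx
          obtain ⟨Y, hY, hY'⟩ := hboth x hx0 (Or.inr fun s hs => by
            have hs0 : s ≠ 0 := by rintro rfl; exact hw (by simpa using hs)
            exact hxw ⟨s⁻¹, by rw [hs, smul_smul, inv_mul_cancel₀ hs0, one_smul]⟩)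
          exact ⟨Y, hY, fun y hy => hY' y
            (Finset.mem_filter.1 (Finset.mem_filter.1 hy).1).1⟩
      have := card_split G _ _ _ hzero (card_split _ _ _ _ hpar hgen)
      rw [mul_left_comm, h7, mul_left_comm, h6] at this
      linarith
  · have hrest : (G.filter fun p => ¬ p.1 = 0).card ≤ S.card ^ d * (2 * S.card ^ (d - 2)) := by
      refine card_pairs_le _ ((grid d S).filter fun x => ¬ x = 0) _ _ ?_ ?_ ?_
      · exact (Finset.card_le_card (Finset.filter_subset _ _)).trans (card_grid d S).le
      · rintro ⟨x, y⟩ hp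
        rw [Finset.mem_filter] at hp ⊢
        exact ⟨(hG x y hp.1).1, hp.2⟩
      · intro x hx
        obtain ⟨Y, hY, hY'⟩ := hboth x (Finset.mem_filter.1 hx).2 (Or.inl hB)
        exact ⟨Y, hY, fun y hy => hY' y (Finset.mem_filter.1 hy).1⟩
    have := card_split G _ _ _ hzero hrest
    rw [mul_left_comm, h6] at this
    linarith

lemma card_system_le {d : ℕ} (hd : 2 ≤ d) (S : Finset ℝ) (hM : 1 ≤ S.card)
    (u w : Fin d → ℝ) (A B g h : ℝ) (hg : g = 0 → u ≠ 0) (hh : h = 0 → w ≠ 0)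
    (huw : w = 0 → u ≠ 0)
    (G : Finset ((Fin d → ℝ) × (Fin d → ℝ)))
    (hG : ∀ x y, (x, y) ∈ G → x ∈ grid d S ∧ y ∈ grid d S ∧
      u ⬝ᵥ x + g * (x ⬝ᵥ y) + A * (x ⬝ᵥ x) = 0 ∧
      w ⬝ᵥ y + h * (x ⬝ᵥ y) + B * (y ⬝ᵥ y) = 0) :
    G.card ≤ 5 * S.card ^ (2 * (d - 1)) := by
  by_cases hg0 : g = 0
  · refine card_system_le_of_decoupled hd S hM u w A B h (hg hg0) hh G fun x y hxy => ?_
    obtain ⟨h1, h2, h3, h4⟩ := hG x y hxy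
    exact ⟨h1, h2, by simpa [hg0] using h3, h4⟩
  by_cases hh0 : h = 0
  · -- exchanging the roles of `x` and `y`
    rw [← Finset.card_map (Equiv.prodComm _ _).toEmbedding (s := G)]
    refine card_system_le_of_decoupled hd S hM w u B A g (hh hh0) (fun h => absurd h hg0) _
      fun x y hxy => ?_
    have hyx : (y, x) ∈ G := by simpa using hxy
    obtain ⟨h1, h2, h3, h4⟩ := hG y x hyx
    refine ⟨h2, h1, by simpa [hh0] using h4, ?_⟩
    rw [dotProduct_comm x y]
    exact h3
  · exact card_system_le_of_coupled hd S hM u w A B g h hg0 hh0 (fun _ => huw) G hG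

/-! ### Lattice points -/

/-- The points of the lattice `ℤ / L` in the interval `(-R, R)` lie in a finite set of at most
`2 R L + 1` points. -/
lemma exists_lattice_finset (R L : ℝ) (hR : 1 ≤ R) (hL : 2 ≤ L) :
    ∃ S : Finset ℝ, 1 ≤ S.card ∧ (S.card : ℝ) ≤ 2 * (R * L) + 1 ∧
      ∀ t : ℝ, (∃ c : ℤ, t = (c : ℝ) / L) → |t| < R → t ∈ S := by
  have hL0 : 0 < L := by linarith
  have hRL : 0 ≤ R * L := by positivity
  have hfl : 0 ≤ ⌊R * L⌋ := Int.floor_nonneg.2 hRL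
  have hmem : ∀ t : ℝ, (∃ c : ℤ, t = (c : ℝ) / L) → |t| < R →
      t ∈ (Finset.Icc (-⌊R * L⌋) ⌊R * L⌋).image (fun c : ℤ => (c : ℝ) / L) := by
    rintro t ⟨c, rfl⟩ hc
    refine Finset.mem_image.2 ⟨c, ?_, rfl⟩
    rw [abs_div, abs_of_pos hL0, div_lt_iff₀ hL0, abs_lt] at hc
    have h1 : c ≤ ⌊R * L⌋ := Int.le_floor.2 hc.2.le
    have h2 : -c ≤ ⌊R * L⌋ := Int.le_floor.2 (by push_cast; linarith)
    exact Finset.mem_Icc.2 ⟨by omega, h1⟩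
  refine ⟨_, ?_, ?_, hmem⟩
  · exact Finset.card_pos.2 ⟨_, hmem 0 ⟨0, by simp⟩ (by simp; linarith)⟩
  · have h1 : ((Finset.Icc (-⌊R * L⌋) ⌊R * L⌋).image (fun c : ℤ => (c : ℝ) / L)).card
        ≤ (Finset.Icc (-⌊R * L⌋) ⌊R * L⌋).card := Finset.card_image_le
    rw [Int.card_Icc] at h1
    have h2 : (((⌊R * L⌋ + 1 - -⌊R * L⌋).toNat : ℤ) : ℝ) = 2 * (⌊R * L⌋ : ℝ) + 1 := by
      rw [Int.toNat_of_nonneg (by omega)]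
      push_cast
      ring
    have h3 : (⌊R * L⌋ : ℝ) ≤ R * L := Int.floor_le _
    have h4 : (((Finset.Icc (-⌊R * L⌋) ⌊R * L⌋).image (fun c : ℤ => (c : ℝ) / L)).card : ℝ)
        ≤ (((⌊R * L⌋ + 1 - -⌊R * L⌋).toNat : ℤ) : ℝ) := by exact_mod_cast h1
    linarith

lemma comb_ne_zero {d : ℕ} (z v : Fin d → ℝ) (hz : z ≠ 0) (hv : v ≠ 0) (hzv : z ⬝ᵥ v = 0)
    (a b : ℝ) (hab : a ≠ 0 ∨ b ≠ 0) : a • z + b • v ≠ 0 := by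
  intro h
  have h1 : a * (z ⬝ᵥ z) = 0 := by
    simpa [dotProduct_add, hzv] using congrArg (z ⬝ᵥ ·) h
  have h2 : b * (v ⬝ᵥ v) = 0 := by
    simpa [dotProduct_add, dotProduct_comm v z, hzv] using congrArg (v ⬝ᵥ ·) h
  rcases hab with ha | hb
  · exact hz (dotProduct_self_eq_zero.1 ((mul_eq_zero.1 h1).resolve_left ha))
  · exact hv (dotProduct_self_eq_zero.1 ((mul_eq_zero.1 h2).resolve_left hb))

theorem statement4 (d N : ℕ) (hd : 2 ≤ d) (hN : N = 2 ∨ N = 3 ∨ N = 4)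
    (α : Matrix (Fin N) (Fin N) ℤ) (hskew : α.transpose = -α)
    (hentries : ∀ i j, α i j = -1 ∨ α i j = 0 ∨ α i j = 1)
    (hirr : IrredMat α) (hα1N : α ⟨0, by omega⟩ ⟨N - 1, by omega⟩ = 1)
    (R L : ℝ) (hR : 1 ≤ R) (hL : 2 ≤ L)
    (z₁ v : Ed d) (k₁ kv : Fin d → ℤ)
    (hz₁ : ∀ i, z₁ i = (k₁ i : ℝ) / L) (hv : ∀ i, v i = (kv i : ℝ) / L)
    (hz0 : z₁ ≠ 0) (hv0 : v ≠ 0) (hdot : ∑ i, z₁ i * v i = 0)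
    (hbox : ∀ i, |z₁ i| < ((N : ℝ) - 1) * R ∧ |v i| < ((N : ℝ) - 1) * R) :
    (QtildeSet α L z₁ v R).Finite ∧
      ((QtildeSet α L z₁ v R).ncard : ℝ) ≤
        2 ^ ((N - 2) * d) * ((N : ℝ) * R * L) ^ ((N - 2) * (d - 1)) := by
  have hskew' : ∀ i j, α j i = -α i j := fun i j => by
    have := congrFun (congrFun hskew i) j
    simpa using this
  obtain ⟨S, hS1, hS2, hS⟩ := exists_lattice_finset R L hR hL
  have hRL : 2 ≤ R * L := by nlinarith
  have hz' : z₁.ofLp ≠ 0 := fun h => hz0 (by ext i; simp [h])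
  have hv' : v.ofLp ≠ 0 := fun h => hv0 (by ext i; simp [h])
  have hdot' : z₁.ofLp ⬝ᵥ v.ofLp = 0 := hdot
  have hdiag : ∀ i, α i i = 0 := fun i => by have := hskew' i i; omega
  rcases hN with rfl | rfl | rfl
  · have : Subsingleton (Fin (2 - 2) → Ed d) := ⟨fun a b => funext fun i => i.elim0⟩
    refine ⟨Set.toFinite _, ?_⟩
    have h1 : (QtildeSet α L z₁ v R).ncard ≤ 1 := Set.ncard_le_one_of_subsingleton _
    have h2 : ((QtildeSet α L z₁ v R).ncard : ℝ) ≤ 1 := by exact_mod_cast h1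
    simpa using h2
  · -- one quadric in one vector variable
    classical
    set a : ℤ := α 1 0 with ha
    set b : ℤ := α 1 2 with hb
    have hab : (a : ℝ) ≠ 0 ∨ (b : ℝ) ≠ 0 := by
      obtain ⟨i, hi, j, hj, hij⟩ := hirr {1} (by simp) (by decide)
      rw [Finset.mem_singleton] at hi
      subst hi
      fin_cases j
      · left; exact_mod_cast hij
      · simp at hj
      · right; exact_mod_cast hij
    have hu := comb_ne_zero z₁.ofLp v.ofLp hz' hv' hdot' a b hab
    set u := (a : ℝ) • z₁.ofLp + (b : ℝ) • v.ofLp with hu_def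
    have hcard := card_quadric_le (by omega : 0 < d) S u ((a : ℝ) * b) 0 (Or.inr hu)
    set G := (grid d S).filter fun y => u ⬝ᵥ y + ((a : ℝ) * b) * (y ⬝ᵥ y) = 0 with hGdef
    let f : (Fin (3 - 2) → Ed d) → (Fin d → ℝ) := fun w => (w 0).ofLp
    have hmaps : ∀ w ∈ QtildeSet α L z₁ v R, f w ∈ (G : Set (Fin d → ℝ)) := by
      rintro w ⟨h1, h2, h3⟩
      rw [hGdef, Finset.mem_coe, Finset.mem_filter]
      refine ⟨Fintype.mem_piFinset.2 fun i => hS _ (h1 0 i) (h3 0 i), ?_⟩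
      have e := h2 0
      have e1 : embIdx 3 0 = 1 := rfl
      have e2 : oneIdx 3 0 = 0 := rfl
      have e3 : lastIdx 3 0 = 2 := rfl
      rw [← e, hu_def]
      simp only [qpoly, dotProduct, f, Finset.mul_sum, ← Finset.sum_add_distrib]
      refine Finset.sum_congr rfl fun i _ => ?_
      simp only [Nat.reduceSub, Finset.univ_unique, Fin.default_eq_zero, Finset.sum_singleton,
        e1, e2, e3, hskew' 1 0, hdiag, Pi.add_apply, Pi.smul_apply, smul_eq_mul]
      rw [← ha, ← hb]
      push_cast
      ring
    have hinj : Set.InjOn f (QtildeSet α L z₁ v R) := by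
      intro w _ w' _ hww
      funext j
      have : j = 0 := Fin.ext (by simp)
      subst this
      exact WithLp.ofLp_injective 2 hww
    refine ⟨Set.Finite.of_injOn hmaps hinj G.finite_toSet, ?_⟩
    have h1 := Set.ncard_le_ncard_of_injOn f hmaps hinj G.finite_toSet
    rw [Set.ncard_coe_finset] at h1
    have h2 : ((QtildeSet α L z₁ v R).ncard : ℝ) ≤ 2 * (S.card : ℝ) ^ (d - 1) := by
      exact_mod_cast h1.trans hcard
    refine h2.trans ?_
    have h3 : (S.card : ℝ) ≤ ((3 : ℕ) : ℝ) * R * L := by push_cast; linarith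
    have h4 : (2 : ℝ) ≤ 2 ^ ((3 - 2) * d) := by
      calc (2 : ℝ) = 2 ^ 1 := by norm_num
        _ ≤ 2 ^ ((3 - 2) * d) := pow_le_pow_right₀ (by norm_num) (by omega)
    have h5 : (3 - 2) * (d - 1) = d - 1 := by omega
    rw [h5]
    exact mul_le_mul h4 (pow_le_pow_left₀ (Nat.cast_nonneg _) h3 _)
      (pow_nonneg (Nat.cast_nonneg _) _) (pow_nonneg zero_le_two _)
  · -- two coupled quadrics in two vector variables
    classical
    set a : ℤ := α 1 0 with ha
    set b : ℤ := α 1 3 with hb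
    set c : ℤ := α 2 0 with hc
    set e : ℤ := α 2 3 with he
    set f : ℤ := α 1 2 with hf
    have irr1 : ¬ (a = 0 ∧ b = 0 ∧ f = 0) := by
      rintro ⟨h1, h2, h3⟩
      obtain ⟨i, hi, j, hj, hij⟩ := hirr {1} (by simp) (by decide)
      rw [Finset.mem_singleton] at hi
      subst hi
      fin_cases j
      · exact hij h1
      · simp at hj
      · exact hij h3
      · exact hij h2
    have irr2 : ¬ (c = 0 ∧ e = 0 ∧ f = 0) := by
      rintro ⟨h1, h2, h3⟩
      obtain ⟨i, hi, j, hj, hij⟩ := hirr {2} (by simp) (by decide)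
      rw [Finset.mem_singleton] at hi
      subst hi
      fin_cases j
      · exact hij h1
      · exact hij (show α 2 1 = 0 by rw [hskew' 1 2]; omega)
      · simp at hj
      · exact hij h2
    have irr3 : ¬ (a = 0 ∧ b = 0 ∧ c = 0 ∧ e = 0) := by
      rintro ⟨h1, h2, h3, h4⟩
      obtain ⟨i, hi, j, hj, hij⟩ := hirr {1, 2} (by simp) (by decide)
      simp only [Finset.mem_insert, Finset.mem_singleton] at hi
      rcases hi with rfl | rfl
      · fin_cases j
        · exact hij h1
        · simp at hj
        · simp at hj
        · exact hij h2
      · fin_cases j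
        · exact hij h3
        · simp at hj
        · simp at hj
        · exact hij h4
    have hcomb : ∀ s t : ℤ, (s : ℝ) • z₁.ofLp + (t : ℝ) • v.ofLp = 0 → s = 0 ∧ t = 0 := by
      intro s t hst
      by_contra hcon
      refine comb_ne_zero z₁.ofLp v.ofLp hz' hv' hdot' s t ?_ hst
      simp only [ne_eq, Int.cast_eq_zero]
      tauto
    set u := (a : ℝ) • z₁.ofLp + (b : ℝ) • v.ofLp with hu_def
    set w₀ := (c : ℝ) • z₁.ofLp + (e : ℝ) • v.ofLp with hw_def
    set G := (grid d S ×ˢ grid d S).filter fun p : (Fin d → ℝ) × (Fin d → ℝ) =>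
      u ⬝ᵥ p.1 + ((f : ℝ) + b * c) * (p.1 ⬝ᵥ p.2) + ((a : ℝ) * b) * (p.1 ⬝ᵥ p.1) = 0 ∧
      w₀ ⬝ᵥ p.2 + ((e : ℝ) * a - f) * (p.1 ⬝ᵥ p.2) + ((e : ℝ) * c) * (p.2 ⬝ᵥ p.2) = 0
      with hGdef
    have hcard : G.card ≤ 5 * S.card ^ (2 * (d - 1)) := by
      refine card_system_le hd S hS1 u w₀ ((a : ℝ) * b) ((e : ℝ) * c) ((f : ℝ) + b * c)
        ((e : ℝ) * a - f) ?_ ?_ ?_ G ?_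
      · intro hg hu
        obtain ⟨h1, h2⟩ := hcomb a b hu
        have hg' : f + b * c = 0 := by exact_mod_cast hg
        exact irr1 ⟨h1, h2, by simpa [h2] using hg'⟩
      · intro hh hw
        obtain ⟨h1, h2⟩ := hcomb c e hw
        have hh' : e * a - f = 0 := by exact_mod_cast hh
        exact irr2 ⟨h1, h2, by simpa [h2] using hh'⟩
      · intro hw hu
        obtain ⟨h1, h2⟩ := hcomb c e hw
        obtain ⟨h3, h4⟩ := hcomb a b hu
        exact irr3 ⟨h3, h4, h1, h2⟩
      · intro x y hxy
        rw [hGdef, Finset.mem_filter, Finset.mem_product] at hxy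
        exact ⟨hxy.1.1, hxy.1.2, hxy.2⟩
    let F : (Fin (4 - 2) → Ed d) → (Fin d → ℝ) × (Fin d → ℝ) := fun w => ((w 0).ofLp, (w 1).ofLp)
    have hmaps : ∀ w ∈ QtildeSet α L z₁ v R, F w ∈ (G : Set ((Fin d → ℝ) × (Fin d → ℝ))) := by
      rintro w ⟨h1, h2, h3⟩
      rw [hGdef, Finset.mem_coe, Finset.mem_filter, Finset.mem_product]
      refine ⟨⟨Fintype.mem_piFinset.2 fun i => hS _ (h1 0 i) (h3 0 i),
        Fintype.mem_piFinset.2 fun i => hS _ (h1 1 i) (h3 1 i)⟩, ?_⟩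
      have e1 : embIdx 4 0 = 1 := rfl
      have e2 : ∀ j, oneIdx 4 j = 0 := fun _ => rfl
      have e3 : ∀ j, lastIdx 4 j = 3 := fun _ => rfl
      have e4 : embIdx 4 1 = 2 := rfl
      have hsum : ∀ φ : Fin (4 - 2) → ℝ, ∑ m, φ m = φ 0 + φ 1 := fun φ => Fin.sum_univ_two φ
      constructor
      · rw [← h2 0, hu_def]
        simp only [qpoly, dotProduct, F, Finset.mul_sum, ← Finset.sum_add_distrib]
        refine Finset.sum_congr rfl fun i _ => ?_
        simp only [hsum, e1, e2, e3, e4, hskew' 1 0, hskew' 2 0, hdiag, Pi.add_apply,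
          Pi.smul_apply, smul_eq_mul]
        rw [← ha, ← hb, ← hc, ← hf]
        push_cast
        ring
      · rw [← h2 1, hw_def]
        simp only [qpoly, dotProduct, F, Finset.mul_sum, ← Finset.sum_add_distrib]
        refine Finset.sum_congr rfl fun i _ => ?_
        simp only [hsum, e1, e2, e3, e4, hskew' 1 0, hskew' 2 0, hskew' 1 2, hdiag, Pi.add_apply,
          Pi.smul_apply, smul_eq_mul]
        rw [← ha, ← hc, ← he, ← hf]
        push_cast
        ring
    have hinj : Set.InjOn F (QtildeSet α L z₁ v R) := by
      intro w _ w' _ hww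
      funext j
      change Fin 2 at j
      fin_cases j
      · exact WithLp.ofLp_injective 2 (congrArg Prod.fst hww)
      · exact WithLp.ofLp_injective 2 (congrArg Prod.snd hww)
    refine ⟨Set.Finite.of_injOn hmaps hinj G.finite_toSet, ?_⟩
    have h1 := Set.ncard_le_ncard_of_injOn F hmaps hinj G.finite_toSet
    rw [Set.ncard_coe_finset] at h1
    have h2 : ((QtildeSet α L z₁ v R).ncard : ℝ) ≤ 5 * (S.card : ℝ) ^ (2 * (d - 1)) := by
      exact_mod_cast h1.trans hcard
    refine h2.trans ?_
    have h3 : (S.card : ℝ) ≤ ((4 : ℕ) : ℝ) * R * L := by push_cast; linarith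
    have h4 : (5 : ℝ) ≤ 2 ^ ((4 - 2) * d) := by
      calc (5 : ℝ) ≤ 2 ^ 4 := by norm_num
        _ ≤ 2 ^ ((4 - 2) * d) := pow_le_pow_right₀ (by norm_num) (by omega)
    have h5 : (4 - 2) * (d - 1) = 2 * (d - 1) := by omega
    rw [h5]
    exact mul_le_mul h4 (pow_le_pow_left₀ (Nat.cast_nonneg _) h3 _)
      (pow_nonneg (Nat.cast_nonneg _) _) (pow_nonneg zero_le_two _)
end
end

section
/- Let d ≥ 1. There is an absolute constant C such that for every j ∈ {1,2,3,4}, every τ ≥ 0 and every s⃗ = (s₁,s₂,s₃,s₄) ∈ (R^d)^4, one has |Z^j(τ; s⃗) − 1/γ_{1234}| ≤ C·e^{−2τ}, where γ_{1234} := γ_{s₁}+γ_{s₂}+γ_{s₃}+γ_{s₄}. -/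
/-!
Write `G = ∑ γ_m ≥ 4`. For `0 ≤ l ≤ τ` and `γ ≥ 1` the quotient `sinh (γ l) / sinh (γ τ)` lies between
`e^{-γ(τ-l)} (1 - e^{-2l})` and `e^{-γ(τ-l)}` (`sinh_ratio_le`, `le_sinh_ratio`). Multiplying the
three quotients by `e^{-γ_j(τ-l)}` and using `(1-x)³ ≥ 1-3x`, the integrand of `Z^j` lies between
`e^{-G(τ-l)} - 3 e^{-4τ+2l}` and `e^{-G(τ-l)}` (`integrand_bounds`). Integrating,
`(1 - e^{-Gτ})/G - (3/2) e^{-2τ} ≤ Z^j ≤ 1/G`, so that `C = 3` works.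
-/

open MeasureTheory Real

noncomputable section

/-- the kernel `Z^j(τ; s⃗)`, expressed in terms of `γ_m := γ⁰(|s_m|²)`, `m = 1,…,4`. -/
def Zker (γ : Fin 4 → ℝ) (j : Fin 4) (τ : ℝ) : ℝ :=
  if τ = 0 then 0 else
    ∫ l in (0 : ℝ)..τ, Real.exp (-(γ j) * (τ - l)) *
      ∏ m ∈ Finset.univ \ {j}, Real.sinh (γ m * l) / Real.sinh (γ m * τ)

lemma sinh_ratio_le {g l τ : ℝ} (hg : 1 ≤ g) (hτ : 0 < τ) (hlτ : l ≤ τ) :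
    sinh (g * l) / sinh (g * τ) ≤ exp (-g * (τ - l)) := by
  have hs : 0 < sinh (g * τ) := Real.sinh_pos_iff.2 (by positivity)
  rw [div_le_iff₀ hs, Real.sinh_eq, Real.sinh_eq, mul_div_assoc', mul_sub, ← exp_add, ← exp_add]
  have h1 : -g * (τ - l) + g * τ = g * l := by ring
  have h2 : exp (-g * (τ - l) + -(g * τ)) ≤ exp (-(g * l)) := by
    apply exp_le_exp.2
    nlinarith
  rw [h1]
  linarith

lemma le_sinh_ratio {g l τ : ℝ} (hg : 1 ≤ g) (hτ : 0 < τ) (hl : 0 ≤ l) :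
    exp (-g * (τ - l)) * (1 - exp (-2 * l)) ≤ sinh (g * l) / sinh (g * τ) := by
  have hs : 0 < sinh (g * τ) := Real.sinh_pos_iff.2 (by positivity)
  have hl' : 0 ≤ sinh (g * l) := Real.sinh_nonneg_iff.2 (by positivity)
  have h1 : exp (-2 * (g * l)) ≤ exp (-2 * l) := by
    apply exp_le_exp.2
    nlinarith
  -- `e^{a-b} (1 - e^{-2a}) sinh b = (1 - e^{-2b}) sinh a` with `a = g l`, `b = g τ`
  have key : exp (-g * (τ - l)) * (1 - exp (-2 * (g * l))) * sinh (g * τ)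
      = (1 - exp (-2 * (g * τ))) * sinh (g * l) := by
    have e1 : exp (-g * (τ - l)) = exp (g * l) * (exp (g * τ))⁻¹ := by
      rw [← exp_neg, ← exp_add]; ring_nf
    have e2 : ∀ x : ℝ, exp (-2 * x) = (exp x)⁻¹ * (exp x)⁻¹ := by
      intro x
      rw [← exp_neg, ← exp_add]; ring_nf
    rw [e1, e2, e2, Real.sinh_eq, Real.sinh_eq, exp_neg, exp_neg]
    have := (exp_pos (g * l)).ne'
    have := (exp_pos (g * τ)).ne'
    field_simp
  rw [le_div_iff₀ hs]
  calc exp (-g * (τ - l)) * (1 - exp (-2 * l)) * sinh (g * τ)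
      ≤ exp (-g * (τ - l)) * (1 - exp (-2 * (g * l))) * sinh (g * τ) := by gcongr
    _ = (1 - exp (-2 * (g * τ))) * sinh (g * l) := key
    _ ≤ sinh (g * l) := by nlinarith [exp_pos (-2 * (g * τ))]

lemma four_le_sum {γ : Fin 4 → ℝ} (hγ : ∀ m, 1 ≤ γ m) : 4 ≤ ∑ m, γ m := by
  rw [Fin.sum_univ_four]
  linarith [hγ 0, hγ 1, hγ 2, hγ 3]

lemma integrand_bounds {γ : Fin 4 → ℝ} (hγ : ∀ m, 1 ≤ γ m) (j : Fin 4) {l τ : ℝ}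
    (hτ : 0 < τ) (hl : 0 ≤ l) (hlτ : l ≤ τ) :
    exp (-(∑ m, γ m) * (τ - l)) - 3 * exp (-4 * τ + 2 * l) ≤
        exp (-(γ j) * (τ - l)) * ∏ m ∈ Finset.univ \ {j}, sinh (γ m * l) / sinh (γ m * τ) ∧
      exp (-(γ j) * (τ - l)) * ∏ m ∈ Finset.univ \ {j}, sinh (γ m * l) / sinh (γ m * τ) ≤
        exp (-(∑ m, γ m) * (τ - l)) := by
  have hx1 : exp (-2 * l) ≤ 1 := exp_le_one_iff.2 (by linarith)
  have hx0 := exp_pos (-2 * l)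
  have hprod : exp (-(γ j) * (τ - l)) * ∏ m ∈ Finset.univ \ {j}, exp (-(γ m) * (τ - l))
      = exp (-(∑ m, γ m) * (τ - l)) := by
    rw [Finset.sdiff_singleton_eq_erase,
      Finset.mul_prod_erase Finset.univ (fun m => exp (-(γ m) * (τ - l))) (Finset.mem_univ j),
      ← exp_sum, ← Finset.sum_mul, Finset.sum_neg_distrib]
  have hcard : (Finset.univ \ {j} : Finset (Fin 4)).card = 3 := by
    rw [Finset.sdiff_singleton_eq_erase, Finset.card_erase_of_mem (Finset.mem_univ j)]
    simp
  have hlow : ∀ m, 0 ≤ exp (-(γ m) * (τ - l)) * (1 - exp (-2 * l)) := fun m =>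
    mul_nonneg (exp_pos _).le (by linarith)
  constructor
  · have h1 : ∏ m ∈ Finset.univ \ {j}, exp (-(γ m) * (τ - l)) * (1 - exp (-2 * l)) ≤
        ∏ m ∈ Finset.univ \ {j}, sinh (γ m * l) / sinh (γ m * τ) :=
      Finset.prod_le_prod (fun m _ => hlow m) (fun m _ => le_sinh_ratio (hγ m) hτ hl)
    rw [Finset.prod_mul_distrib, Finset.prod_const, hcard] at h1
    have h2 := mul_le_mul_of_nonneg_left h1 (exp_pos (-(γ j) * (τ - l))).le
    rw [← mul_assoc, hprod] at h2
    refine le_trans ?_ h2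
    have h3 : 1 - 3 * exp (-2 * l) ≤ (1 - exp (-2 * l)) ^ 3 := by
      nlinarith [mul_nonneg (sq_nonneg (exp (-2 * l))) (by linarith : 0 ≤ 3 - exp (-2 * l))]
    have h4 := mul_le_mul_of_nonneg_left h3 (exp_pos (-(∑ m, γ m) * (τ - l))).le
    have h5 : exp (-(∑ m, γ m) * (τ - l)) * exp (-2 * l) ≤ exp (-4 * τ + 2 * l) := by
      rw [← exp_add]
      apply exp_le_exp.2
      nlinarith [four_le_sum hγ]
    nlinarith
  · rw [← hprod]
    refine mul_le_mul_of_nonneg_left (Finset.prod_le_prod (fun m _ => ?_)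
      (fun m _ => sinh_ratio_le (hγ m) hτ hlτ)) (exp_pos _).le
    exact (hlow m).trans (le_sinh_ratio (hγ m) hτ hl)

lemma integral_exp_main {G : ℝ} (hG : 0 < G) (τ : ℝ) :
    ∫ l in (0 : ℝ)..τ, exp (-G * (τ - l)) = (1 - exp (-G * τ)) / G := by
  have h : ∀ l ∈ Set.uIcc 0 τ,
      HasDerivAt (fun l => exp (-G * (τ - l)) / G) (exp (-G * (τ - l))) l := by
    intro l _
    have := ((((hasDerivAt_id l).const_sub τ).const_mul (-G)).exp).div_const G
    refine this.congr_deriv ?_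
    simp only [id]
    field_simp
  rw [intervalIntegral.integral_eq_sub_of_hasDerivAt h
    (Continuous.intervalIntegrable (by fun_prop) _ _)]
  simp
  ring

lemma integral_exp_error (τ : ℝ) :
    ∫ l in (0 : ℝ)..τ, 3 * exp (-4 * τ + 2 * l) = 3 / 2 * (exp (-2 * τ) - exp (-4 * τ)) := by
  have h : ∀ l ∈ Set.uIcc 0 τ,
      HasDerivAt (fun l => 3 / 2 * exp (-4 * τ + 2 * l)) (3 * exp (-4 * τ + 2 * l)) l := by
    intro l _
    have := ((((hasDerivAt_id l).const_mul 2).const_add (-4 * τ)).exp).const_mul (3 / 2)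
    refine this.congr_deriv ?_
    simp only [id]
    ring
  rw [intervalIntegral.integral_eq_sub_of_hasDerivAt h
    (Continuous.intervalIntegrable (by fun_prop) _ _)]
  have e : -4 * τ + 2 * τ = -2 * τ := by ring
  rw [e, mul_zero, add_zero]
  ring

lemma abs_Zker_sub_le {γ : Fin 4 → ℝ} (hγ : ∀ m, 1 ≤ γ m) (j : Fin 4) {τ : ℝ} (hτ : 0 ≤ τ) :
    |Zker γ j τ - 1 / ∑ m, γ m| ≤ 3 * exp (-2 * τ) := by
  have hG := four_le_sum hγ
  have hB := fun (l : ℝ) (h : 0 < τ) (hl : l ∈ Set.Icc 0 τ) => integrand_bounds hγ j h hl.1 hl.2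
  unfold Zker
  set G := ∑ m, γ m with hGdef
  have hGinv : 1 / G ≤ 1 := by
    rw [div_le_one (by linarith)]
    linarith
  have hGpos : 0 < 1 / G := by positivity
  rcases hτ.eq_or_lt with rfl | hpos
  · rw [if_pos rfl, zero_sub, abs_neg, abs_of_pos hGpos]
    simp
    rw [one_div] at hGinv
    linarith
  rw [if_neg hpos.ne']
  have hint : IntervalIntegrable (fun l => exp (-(γ j) * (τ - l)) *
      ∏ m ∈ Finset.univ \ {j}, sinh (γ m * l) / sinh (γ m * τ)) volume 0 τ :=
    Continuous.intervalIntegrable (by fun_prop) _ _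
  have hint1 : IntervalIntegrable (fun l => exp (-G * (τ - l))) volume 0 τ :=
    Continuous.intervalIntegrable (by fun_prop) _ _
  have hint2 : IntervalIntegrable (fun l => 3 * exp (-4 * τ + 2 * l)) volume 0 τ :=
    Continuous.intervalIntegrable (by fun_prop) _ _
  have hup := intervalIntegral.integral_mono_on hτ hint hint1 (fun l hl => (hB l hpos hl).2)
  have hlo := intervalIntegral.integral_mono_on hτ (hint1.sub hint2) hint
    (fun l hl => (hB l hpos hl).1)
  rw [intervalIntegral.integral_sub hint1 hint2, integral_exp_error] at hlo
  rw [integral_exp_main (by linarith), sub_div] at hlo hup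
  have he : exp (-G * τ) / G ≤ exp (-2 * τ) := by
    rw [div_le_iff₀ (by linarith)]
    have : exp (-G * τ) ≤ exp (-2 * τ) := by
      apply exp_le_exp.2
      nlinarith
    nlinarith [exp_pos (-2 * τ)]
  have he0 : 0 ≤ exp (-G * τ) / G := by positivity
  have h4 := exp_pos (-4 * τ)
  have h2 := exp_pos (-2 * τ)
  rw [abs_le]
  constructor <;> linarith

theorem statement9 (d : ℕ) (hd : 1 ≤ d) (rstar : ℝ) (hrstar : 0 < rstar)
    (γ₀ : ℝ → ℝ)
    (hsmooth : ContDiffOn ℝ (⊤ : ℕ∞) γ₀ (Set.Ioi 0))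
    (hmono : MonotoneOn γ₀ (Set.Ici 0))
    (hge1 : ∀ y : ℝ, 0 ≤ y → 1 ≤ γ₀ y)
    (hgrow : ∃ c C : ℝ, 0 < c ∧ 0 < C ∧ ∀ y : ℝ, 0 ≤ y →
      c * (1 + y) ^ rstar ≤ γ₀ y ∧ γ₀ y ≤ C * (1 + y) ^ rstar)
    (hder : ∀ n : ℕ, ∃ C : ℝ, ∃ k : ℕ, ∀ y : ℝ, 1 ≤ y → |iteratedDeriv n γ₀ y| ≤ C * y ^ k) :
    ∃ C : ℝ, ∀ j : Fin 4, ∀ τ : ℝ, 0 ≤ τ → ∀ sv : Fin 4 → Ed d,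
      |Zker (fun m => γ₀ (‖sv m‖ ^ 2)) j τ - 1 / (∑ m, γ₀ (‖sv m‖ ^ 2))|
        ≤ C * Real.exp (-2 * τ) := by
  exact ⟨3, fun j τ hτ sv => abs_Zker_sub_le (fun m => hge1 _ (sq_nonneg _)) j hτ⟩
end
end

section
/- Let d ≥ 1. There is a constant C, depending only on γ⁰, such that for every j ∈ {1,2,3,4}, every R ≥ 1, every s⃗ = (s₁,s₂,s₃,s₄) ∈ (R^d)^4 with |s_l| ≤ R for l = 1,…,4, and every τ > 0, one has |∂Z^j(τ; s⃗)/∂τ| ≤ C·γ⁰(R²). -/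
/-!
Put `f(l) = e^{γ_j l} ∏_{m ≠ j} sinh(γ_m l)`. For `τ > 0` the kernel factors as
`Z(τ) = (∫₀^τ f) / f(τ)`, so it is differentiable with `Z' = 1 - Z · f'/f`, where
`f'/f = γ_j + ∑_{m ≠ j} γ_m coth(γ_m τ)` (`Zker_hasDerivAt`).

The integrand of `Z` is at most `1` and, since `γ_j ≥ 1`, at most `e^{-(τ-l)}`; hence
`0 ≤ Z(τ) ≤ min(τ, 1)` (`Zker_nonneg`, `Zker_le_self`, `Zker_le_one`). As
`γ coth(γ τ) ≤ γ + 1/τ` (`mul_coth_le`), every `γ_m` being at most `G := γ⁰(R²)` gives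
`0 ≤ Z · f'/f ≤ 4 G Z + 3 Z / τ ≤ 4 G + 3`, and `G ≥ 1` yields the bound `|Z'| ≤ 8 G`.
-/

open MeasureTheory Real

noncomputable section

/-- The part of the integrand of `Zker` depending on the integration variable `l` only. -/
def numer (γ : Fin 4 → ℝ) (j : Fin 4) (l : ℝ) : ℝ :=
  Real.exp (γ j * l) * ∏ m ∈ Finset.univ \ {j}, Real.sinh (γ m * l)

/-- The logarithmic derivative of `numer` at `τ > 0`. -/
def rate (γ : Fin 4 → ℝ) (j : Fin 4) (τ : ℝ) : ℝ :=
  γ j + ∑ m ∈ Finset.univ \ {j}, γ m * Real.cosh (γ m * τ) / Real.sinh (γ m * τ)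

lemma numer_continuous (γ : Fin 4 → ℝ) (j : Fin 4) : Continuous (numer γ j) := by
  unfold numer
  fun_prop

lemma sinh_mul_pos {γ : Fin 4 → ℝ} (hγ : ∀ m, 1 ≤ γ m) {τ : ℝ} (hτ : 0 < τ) (m : Fin 4) :
    0 < Real.sinh (γ m * τ) :=
  Real.sinh_pos_iff.2 (mul_pos (by linarith [hγ m]) hτ)

lemma numer_pos {γ : Fin 4 → ℝ} (hγ : ∀ m, 1 ≤ γ m) (j : Fin 4) {τ : ℝ} (hτ : 0 < τ) :
    0 < numer γ j τ :=
  mul_pos (Real.exp_pos _) (Finset.prod_pos fun m _ => sinh_mul_pos hγ hτ m)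

lemma numer_hasDerivAt {γ : Fin 4 → ℝ} (hγ : ∀ m, 1 ≤ γ m) (j : Fin 4) {τ : ℝ} (hτ : 0 < τ) :
    HasDerivAt (numer γ j) (numer γ j τ * rate γ j τ) τ := by
  have hlin : ∀ m, HasDerivAt (fun l => γ m * l) (γ m) τ := fun m => by
    simpa using (hasDerivAt_id τ).const_mul (γ m)
  have hprod := HasDerivAt.fun_finsetProd (u := Finset.univ \ {j})
    (f := fun m l => Real.sinh (γ m * l)) (x := τ)
    (f' := fun m => Real.cosh (γ m * τ) * γ m) (fun m _ => (hlin m).sinh)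
  have h := (hlin j).exp.mul hprod
  have hsum : ∑ m ∈ Finset.univ \ {j},
      (∏ k ∈ (Finset.univ \ {j}).erase m, Real.sinh (γ k * τ)) • (Real.cosh (γ m * τ) * γ m)
      = (∏ m ∈ Finset.univ \ {j}, Real.sinh (γ m * τ)) *
        ∑ m ∈ Finset.univ \ {j}, γ m * Real.cosh (γ m * τ) / Real.sinh (γ m * τ) := by
    rw [Finset.mul_sum]
    refine Finset.sum_congr rfl fun m hm => ?_
    have hs := (sinh_mul_pos hγ hτ m).ne'
    rw [← Finset.mul_prod_erase _ _ hm, smul_eq_mul]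
    rw [mul_div_assoc', eq_div_iff hs]
    ring
  rw [hsum] at h
  refine h.congr_deriv ?_
  unfold numer rate
  ring

lemma Zker_eq {γ : Fin 4 → ℝ} (j : Fin 4) {τ : ℝ} (hτ : 0 < τ) :
    Zker γ j τ = (∫ l in (0 : ℝ)..τ, numer γ j l) / numer γ j τ := by
  rw [Zker, if_neg hτ.ne', ← intervalIntegral.integral_div]
  refine intervalIntegral.integral_congr fun l _ => ?_
  simp only [numer]
  rw [Finset.prod_div_distrib, show -(γ j) * (τ - l) = γ j * l - γ j * τ by ring, Real.exp_sub,
    div_mul_div_comm]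

lemma Zker_hasDerivAt {γ : Fin 4 → ℝ} (hγ : ∀ m, 1 ≤ γ m) (j : Fin 4) {τ : ℝ} (hτ : 0 < τ) :
    HasDerivAt (Zker γ j) (1 - Zker γ j τ * rate γ j τ) τ := by
  have hF : HasDerivAt (fun t => ∫ l in (0 : ℝ)..t, numer γ j l) (numer γ j τ) τ :=
    (numer_continuous γ j).integral_hasStrictDerivAt 0 τ |>.hasDerivAt
  have hpos := numer_pos hγ j hτ
  have h := hF.div (numer_hasDerivAt hγ j hτ) hpos.ne'
  have hev : Zker γ j =ᶠ[nhds τ] (fun t => ∫ l in (0 : ℝ)..t, numer γ j l) / numer γ j := by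
    filter_upwards [lt_mem_nhds hτ] with t ht
    exact Zker_eq j ht
  refine (h.congr_of_eventuallyEq hev).congr_deriv ?_
  rw [Zker_eq j hτ]
  field_simp

lemma numer_nonneg {γ : Fin 4 → ℝ} (hγ : ∀ m, 1 ≤ γ m) (j : Fin 4) {l : ℝ} (hl : 0 ≤ l) :
    0 ≤ numer γ j l :=
  mul_nonneg (Real.exp_pos _).le (Finset.prod_nonneg fun m _ =>
    Real.sinh_nonneg_iff.2 (mul_nonneg (by linarith [hγ m]) hl))

/-- Monotonicity of the `sinh` factors and `γ j ≥ 1` make `e^{-l} numer(l)` nondecreasing. -/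
lemma numer_le {γ : Fin 4 → ℝ} (hγ : ∀ m, 1 ≤ γ m) (j : Fin 4) {l τ : ℝ} (hl : 0 ≤ l)
    (hlτ : l ≤ τ) : numer γ j l ≤ Real.exp (l - τ) * numer γ j τ := by
  unfold numer
  rw [← mul_assoc, ← Real.exp_add]
  refine mul_le_mul (Real.exp_le_exp.2 ?_) (Finset.prod_le_prod ?_ ?_)
    (Finset.prod_nonneg fun m _ => ?_) (Real.exp_pos _).le
  · nlinarith [hγ j]
  · intro m _
    exact Real.sinh_nonneg_iff.2 (mul_nonneg (by linarith [hγ m]) hl)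
  · intro m _
    exact Real.sinh_le_sinh.2 (mul_le_mul_of_nonneg_left hlτ (by linarith [hγ m]))
  · exact Real.sinh_nonneg_iff.2 (mul_nonneg (by linarith [hγ m]) hl)

lemma Zker_nonneg {γ : Fin 4 → ℝ} (hγ : ∀ m, 1 ≤ γ m) (j : Fin 4) {τ : ℝ} (hτ : 0 < τ) :
    0 ≤ Zker γ j τ := by
  rw [Zker_eq j hτ]
  exact div_nonneg (intervalIntegral.integral_nonneg hτ.le fun l hl => numer_nonneg hγ j hl.1)
    (numer_pos hγ j hτ).le

lemma Zker_le_self {γ : Fin 4 → ℝ} (hγ : ∀ m, 1 ≤ γ m) (j : Fin 4) {τ : ℝ} (hτ : 0 < τ) :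
    Zker γ j τ ≤ τ := by
  have hpos := numer_pos hγ j hτ
  rw [Zker_eq j hτ, div_le_iff₀ hpos]
  calc ∫ l in (0 : ℝ)..τ, numer γ j l ≤ ∫ _ in (0 : ℝ)..τ, numer γ j τ := by
        refine intervalIntegral.integral_mono_on hτ.le
          ((numer_continuous γ j).intervalIntegrable _ _) (by simp) fun l hl => ?_
        refine (numer_le hγ j hl.1 hl.2).trans (mul_le_of_le_one_left hpos.le ?_)
        exact Real.exp_le_one_iff.2 (by linarith [hl.2])
    _ = τ * numer γ j τ := by simp

lemma Zker_le_one {γ : Fin 4 → ℝ} (hγ : ∀ m, 1 ≤ γ m) (j : Fin 4) {τ : ℝ} (hτ : 0 < τ) :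
    Zker γ j τ ≤ 1 := by
  have hpos := numer_pos hγ j hτ
  rw [Zker_eq j hτ, div_le_iff₀ hpos]
  have hexp : Continuous fun l => Real.exp (l - τ) * numer γ j τ := by fun_prop
  calc ∫ l in (0 : ℝ)..τ, numer γ j l ≤ ∫ l in (0 : ℝ)..τ, Real.exp (l - τ) * numer γ j τ :=
        intervalIntegral.integral_mono_on hτ.le
          ((numer_continuous γ j).intervalIntegrable _ _) (hexp.intervalIntegrable _ _)
          fun l hl => numer_le hγ j hl.1 hl.2
    _ = (1 - Real.exp (-τ)) * numer γ j τ := by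
        rw [intervalIntegral.integral_mul_const,
          intervalIntegral.integral_comp_sub_right (fun x => Real.exp x), integral_exp]
        simp
    _ ≤ 1 * numer γ j τ :=
        mul_le_mul_of_nonneg_right (by linarith [Real.exp_pos (-τ)]) hpos.le

/-- The bound `g coth(g τ) ≤ g + 1/τ`, which follows from `x e^{-x} ≤ x ≤ sinh x`. -/
lemma mul_coth_le {g τ : ℝ} (hg : 0 < g) (hτ : 0 < τ) :
    g * Real.cosh (g * τ) / Real.sinh (g * τ) ≤ g + 1 / τ := by
  have hx : 0 < g * τ := mul_pos hg hτ
  have hs : g * τ ≤ Real.sinh (g * τ) := Real.self_le_sinh_iff.2 hx.le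
  have hc : Real.cosh (g * τ) ≤ Real.sinh (g * τ) + 1 := by
    have h1 := Real.cosh_sub_sinh (g * τ)
    have h2 : Real.exp (-(g * τ)) ≤ 1 := Real.exp_le_one_iff.2 (by linarith)
    linarith
  rw [div_le_iff₀ (hx.trans_le hs)]
  have hg' : g ≤ 1 / τ * Real.sinh (g * τ) := by
    rw [one_div_mul_eq_div, le_div_iff₀ hτ]
    exact hs
  nlinarith [mul_le_mul_of_nonneg_left hc hg.le]

lemma rate_nonneg {γ : Fin 4 → ℝ} (hγ : ∀ m, 1 ≤ γ m) (j : Fin 4) {τ : ℝ} (hτ : 0 < τ) :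
    0 ≤ rate γ j τ := by
  refine add_nonneg (by linarith [hγ j]) (Finset.sum_nonneg fun m _ => ?_)
  exact div_nonneg (mul_nonneg (by linarith [hγ m]) (Real.cosh_pos _).le)
    (sinh_mul_pos hγ hτ m).le

lemma rate_le {γ : Fin 4 → ℝ} (hγ : ∀ m, 1 ≤ γ m) {G : ℝ} (hG : ∀ m, γ m ≤ G) (j : Fin 4)
    {τ : ℝ} (hτ : 0 < τ) : rate γ j τ ≤ 4 * G + 3 / τ := by
  have hcard : (Finset.univ \ {j} : Finset (Fin 4)).card = 3 := by
    rw [Finset.card_sdiff_of_subset (Finset.subset_univ _)]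
    simp
  have hsum : ∑ m ∈ Finset.univ \ {j}, γ m * Real.cosh (γ m * τ) / Real.sinh (γ m * τ)
      ≤ (Finset.univ \ {j} : Finset (Fin 4)).card • (G + 1 / τ) :=
    Finset.sum_le_card_nsmul _ _ _ fun m _ =>
      (mul_coth_le (by linarith [hγ m]) hτ).trans (by linarith [hG m])
  rw [hcard, nsmul_eq_mul] at hsum
  push_cast at hsum
  have h3 : 3 / τ = 3 * (1 / τ) := by ring
  unfold rate
  rw [h3]
  linarith [hG j]

theorem statement10 (d : ℕ) (hd : 1 ≤ d) (rstar : ℝ) (hrstar : 0 < rstar)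
    (γ₀ : ℝ → ℝ)
    (hsmooth : ContDiffOn ℝ (⊤ : ℕ∞) γ₀ (Set.Ioi 0))
    (hmono : MonotoneOn γ₀ (Set.Ici 0))
    (hge1 : ∀ y : ℝ, 0 ≤ y → 1 ≤ γ₀ y)
    (hgrow : ∃ c C : ℝ, 0 < c ∧ 0 < C ∧ ∀ y : ℝ, 0 ≤ y →
      c * (1 + y) ^ rstar ≤ γ₀ y ∧ γ₀ y ≤ C * (1 + y) ^ rstar)
    (hder : ∀ n : ℕ, ∃ C : ℝ, ∃ k : ℕ, ∀ y : ℝ, 1 ≤ y → |iteratedDeriv n γ₀ y| ≤ C * y ^ k) :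
    ∃ C : ℝ, ∀ j : Fin 4, ∀ R : ℝ, 1 ≤ R → ∀ sv : Fin 4 → Ed d, (∀ m, ‖sv m‖ ≤ R) →
      ∀ τ : ℝ, 0 < τ →
        DifferentiableAt ℝ (Zker (fun m => γ₀ (‖sv m‖ ^ 2)) j) τ ∧
        |deriv (Zker (fun m => γ₀ (‖sv m‖ ^ 2)) j) τ| ≤ C * γ₀ (R ^ 2) := by
  refine ⟨8, fun j R hR sv hsv τ hτ => ?_⟩
  have hγ : ∀ m, 1 ≤ (fun m => γ₀ (‖sv m‖ ^ 2)) m := fun m => hge1 _ (sq_nonneg _)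
  have hG : ∀ m, (fun m => γ₀ (‖sv m‖ ^ 2)) m ≤ γ₀ (R ^ 2) := fun m =>
    hmono (Set.mem_Ici.2 (sq_nonneg _)) (Set.mem_Ici.2 (sq_nonneg _))
      (pow_le_pow_left₀ (norm_nonneg _) (hsv m) 2)
  have hG1 : 1 ≤ γ₀ (R ^ 2) := hge1 _ (sq_nonneg _)
  generalize (fun m => γ₀ (‖sv m‖ ^ 2)) = γ at hγ hG ⊢
  generalize γ₀ (R ^ 2) = G at hG hG1 ⊢
  have hd := Zker_hasDerivAt hγ j hτ
  refine ⟨hd.differentiableAt, ?_⟩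
  rw [hd.deriv]
  have h0 := Zker_nonneg hγ j hτ
  have h1 := Zker_le_one hγ j hτ
  have hZτ : Zker γ j τ / τ ≤ 1 := (div_le_one hτ).2 (Zker_le_self hγ j hτ)
  have hlow : 0 ≤ Zker γ j τ * rate γ j τ := mul_nonneg h0 (rate_nonneg hγ j hτ)
  have hup : Zker γ j τ * rate γ j τ ≤ 4 * G + 3 :=
    calc Zker γ j τ * rate γ j τ ≤ Zker γ j τ * (4 * G + 3 / τ) :=
          mul_le_mul_of_nonneg_left (rate_le hγ hG j hτ) h0
      _ = Zker γ j τ * (4 * G) + 3 * (Zker γ j τ / τ) := by ring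
      _ ≤ 4 * G + 3 := by nlinarith
  rw [abs_le]
  constructor <;> linarith
end
end

section
/- Let d ≥ 2, N > 2, and let L ≥ 2 be real; let α be an N×N irreducible skew-symmetric matrix with entries in {−1,0,1} and α_{1N} = 1. Let z₁, v ∈ Z_L^d ∖ {0} with z₁·v = 0 and Lz₁, Lv ∈ Z^d, and let p be a prime with p > 2·max(|Lz₁|_∞, |Lv|_∞). Then the N−2 polynomials q_j^{(p)} ∈ K[z₂,…,z_{N−1}], 1 < j < N, are linearly independent over K; in particular each q_j^{(p)} is a nonzero polynomial. -/
/-!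
Suppose `∑ c_j q_j = 0` and let `S` be the set of `j` with `c_j ≠ 0`. Comparing linear parts,
`c_j (α_{j1} a + α_{jN} b) = 0` modulo `p`. A combination `s a + t b` with `s, t ∈ {-1, 0, 1}` not
both zero does not vanish modulo `p`: its entries are smaller than `p` in absolute value, so it
would vanish over `ℤ`, which is impossible for nonzero orthogonal vectors
(`coeffs_zero_of_mod`). Hence `α_{j1} = α_{jN} = 0` for `j ∈ S`, and then the quadratic
coefficients of `q_j` are just the `α_{ji}`. For `j ∈ S` and `m ∉ S`, the mixed `z_j z_m` term of
the relation is `c_j α_{jm}`, so `α_{jm} = 0`. Thus `S` is not linked by `α` to its complement,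
which contains the first index, and irreducibility forces `S` to be empty.

Linear and mixed parts are read off by evaluating at points supported on a single coordinate
direction of `K^d` (`eval_qpolyK_line`), which is legitimate because `p` is odd.
-/

open MvPolynomial

noncomputable section

/-- the polynomial `q_j^{(p)} = q_j(·; Lz₁, Lv) mod p`, viewed over the algebraic closure `K`
of `F_p`; here `a = Lz₁` and `bb = Lv` are the integer vectors. -/
def qpolyK (p : ℕ) [Fact p.Prime] (d N : ℕ) (α : Matrix (Fin N) (Fin N) ℤ)
    (a bb : Fin d → ℤ) (j : Fin (N - 2)) :
    MvPolynomial (Fin (N - 2) × Fin d) (AlgebraicClosure (ZMod p)) :=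
  ∑ i : Fin d, X (j, i) *
    (C ((α (embIdx N j) (oneIdx N j) * a i + α (embIdx N j) (lastIdx N j) * bb i : ℤ) :
        AlgebraicClosure (ZMod p)) +
      ∑ m : Fin (N - 2),
        C (((α (embIdx N j) (embIdx N m) -
            α (embIdx N j) (lastIdx N j) * α (oneIdx N j) (embIdx N m) : ℤ) :
          AlgebraicClosure (ZMod p))) * X (m, i))

/-- At a point whose vectors `z_k = y_k e_i` are all multiples of one basis vector `e_i`, only the
`i`-th coordinate contributes to `q_j`. -/
lemma eval_qpolyK_line (p : ℕ) [Fact p.Prime] (d N : ℕ) (α : Matrix (Fin N) (Fin N) ℤ)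
    (a bb : Fin d → ℤ) (j : Fin (N - 2)) (i : Fin d)
    (y : Fin (N - 2) → AlgebraicClosure (ZMod p)) :
    eval (fun k : Fin (N - 2) × Fin d => if k.2 = i then y k.1 else 0) (qpolyK p d N α a bb j) =
      y j * (((α (embIdx N j) (oneIdx N j) * a i + α (embIdx N j) (lastIdx N j) * bb i : ℤ) :
        AlgebraicClosure (ZMod p)) +
      ∑ m : Fin (N - 2), ((α (embIdx N j) (embIdx N m) -
            α (embIdx N j) (lastIdx N j) * α (oneIdx N j) (embIdx N m) : ℤ) :
          AlgebraicClosure (ZMod p)) * y m) := by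
  unfold qpolyK
  rw [map_sum, Finset.sum_eq_single i]
  · simp only [map_mul, map_add, map_sum, eval_X, eval_C, if_true]
  · intro b _ hb
    simp [hb]
  · simp

/-- An integer smaller than `p` in absolute value that vanishes in characteristic `p` is zero. -/
lemma int_eq_zero_of_cast (p : ℕ) [Fact p.Prime] (n : ℤ) (hn : |n| < p)
    (h : (n : AlgebraicClosure (ZMod p)) = 0) : n = 0 :=
  Int.eq_zero_of_abs_lt_dvd ((CharP.intCast_eq_zero_iff _ p n).1 h) hn

/-- Nonzero orthogonal integer vectors with entries below `p / 2` admit no nontrivial relation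
modulo `p` with coefficients in `{-1, 0, 1}`. -/
lemma coeffs_zero_of_mod (p : ℕ) [Fact p.Prime] {d : ℕ} (a bb : Fin d → ℤ)
    (hpa : ∀ i, 2 * |a i| < (p : ℤ)) (hpb : ∀ i, 2 * |bb i| < (p : ℤ))
    (ha : a ≠ 0) (hb : bb ≠ 0) (hdot : ∑ i, a i * bb i = 0) (s t : ℤ)
    (hs : s = -1 ∨ s = 0 ∨ s = 1) (ht : t = -1 ∨ t = 0 ∨ t = 1)
    (h : ∀ i, ((s * a i + t * bb i : ℤ) : AlgebraicClosure (ZMod p)) = 0) : s = 0 ∧ t = 0 := by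
  have hz : ∀ i, s * a i + t * bb i = 0 := by
    intro i
    refine int_eq_zero_of_cast p _ ?_ (h i)
    have h1 := hpa i
    have h2 := hpb i
    rw [abs_lt]
    have := abs_nonneg (a i)
    have := le_abs_self (a i)
    have := neg_abs_le (a i)
    have := abs_nonneg (bb i)
    have := le_abs_self (bb i)
    have := neg_abs_le (bb i)
    rcases hs with rfl | rfl | rfl <;> rcases ht with rfl | rfl | rfl <;> constructor <;> linarith
  -- Pair the relation with `a` and with `bb`.
  have key : ∀ (u w : Fin d → ℤ) (x y : ℤ), u ≠ 0 → ∑ i, u i * w i = 0 →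
      (∀ i, x * u i + y * w i = 0) → x = 0 := by
    intro u w x y hu huw hxy
    have h1 : x * ∑ i, u i * u i = 0 := by
      have h2 : ∑ i, u i * (x * u i + y * w i) = 0 := by simp [hxy]
      have h3 : ∑ i, u i * (x * u i + y * w i) =
          x * ∑ i, u i * u i + y * ∑ i, u i * w i := by
        rw [Finset.mul_sum, Finset.mul_sum, ← Finset.sum_add_distrib]
        exact Finset.sum_congr rfl fun i _ => by ring
      rw [h3, huw] at h2
      simpa using h2
    rcases mul_eq_zero.1 h1 with h2 | h2
    · exact h2
    · exfalso
      apply hu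
      funext i
      have := (Finset.sum_eq_zero_iff_of_nonneg (fun i _ => mul_self_nonneg (u i))).1 h2 i
        (Finset.mem_univ i)
      simpa using this
  exact ⟨key a bb s t ha hdot hz,
    key bb a t s hb (by simpa [mul_comm] using hdot) fun i => by rw [add_comm]; exact hz i⟩

theorem statement17 (d N : ℕ) (hd : 2 ≤ d) (hN : 2 < N) (L : ℝ) (hL : 2 ≤ L)
    (α : Matrix (Fin N) (Fin N) ℤ) (hskew : α.transpose = -α)
    (hentries : ∀ i j, α i j = -1 ∨ α i j = 0 ∨ α i j = 1)
    (hirr : IrredMat α) (hα1N : α ⟨0, by omega⟩ ⟨N - 1, by omega⟩ = 1)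
    (z₁ v : Ed d) (a bb : Fin d → ℤ)
    (hz₁ : ∀ i, z₁ i = (a i : ℝ) / L) (hv : ∀ i, v i = (bb i : ℝ) / L)
    (hz0 : z₁ ≠ 0) (hv0 : v ≠ 0) (hdot : ∑ i, z₁ i * v i = 0)
    (p : ℕ) [Fact p.Prime]
    (hpa : ∀ i, 2 * |a i| < (p : ℤ)) (hpb : ∀ i, 2 * |bb i| < (p : ℤ)) :
    LinearIndependent (AlgebraicClosure (ZMod p)) (fun j : Fin (N - 2) => qpolyK p d N α a bb j) ∧
      ∀ j : Fin (N - 2), qpolyK p d N α a bb j ≠ 0 := by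
  have hL0 : L ≠ 0 := by linarith
  have ha : a ≠ 0 := by
    rintro rfl
    exact hz0 (by ext i; simp [hz₁])
  have hb : bb ≠ 0 := by
    rintro rfl
    exact hv0 (by ext i; simp [hv])
  have hab : ∑ i, a i * bb i = 0 := by
    have h1 : ∑ i, z₁ i * v i = (∑ i, (a i : ℝ) * bb i) / (L * L) := by
      rw [Finset.sum_div]
      exact Finset.sum_congr rfl fun i _ => by rw [hz₁, hv, div_mul_div_comm]
    rw [h1, div_eq_zero_iff, or_iff_left (mul_ne_zero hL0 hL0)] at hdot
    exact_mod_cast hdot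
  have hp2 : (2 : ℤ) < p := by
    obtain ⟨i, hi⟩ := Function.ne_iff.1 ha
    have := Int.one_le_abs hi
    have := hpa i
    omega
  have h2K : (2 : AlgebraicClosure (ZMod p)) ≠ 0 := by
    intro h
    have := int_eq_zero_of_cast p 2 (by simpa using hp2) (by exact_mod_cast h)
    omega
  have hsk : ∀ i j, α j i = -α i j := fun i j => by
    simpa using congrFun (congrFun hskew i) j
  have hdiag : ∀ i, α i i = 0 := fun i => by
    have := hsk i i
    omega
  have hli : LinearIndependent (AlgebraicClosure (ZMod p))
      (fun j : Fin (N - 2) => qpolyK p d N α a bb j) := by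
    rw [Fintype.linearIndependent_iff]
    intro c hc
    have hev : ∀ (i : Fin d) (y : Fin (N - 2) → AlgebraicClosure (ZMod p)),
        ∑ j, c j * (y j * (((α (embIdx N j) (oneIdx N j) * a i
          + α (embIdx N j) (lastIdx N j) * bb i : ℤ) : AlgebraicClosure (ZMod p)) +
          ∑ m : Fin (N - 2), ((α (embIdx N j) (embIdx N m) -
            α (embIdx N j) (lastIdx N j) * α (oneIdx N j) (embIdx N m) : ℤ) :
          AlgebraicClosure (ZMod p)) * y m)) = 0 := by
      intro i y
      have := congrArg
        (eval (fun k : Fin (N - 2) × Fin d => if k.2 = i then y k.1 else 0)) hc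
      simpa only [map_sum, smul_eval, eval_qpolyK_line, map_zero] using this
    have hlin : ∀ j, c j ≠ 0 →
        α (embIdx N j) (oneIdx N j) = 0 ∧ α (embIdx N j) (lastIdx N j) = 0 := by
      intro j hj
      refine coeffs_zero_of_mod p a bb hpa hpb ha hb hab _ _ (hentries _ _) (hentries _ _) ?_
      intro i
      -- The values at `z_j = e_i` and `z_j = -e_i` isolate the linear part.
      have hpos := hev i (Pi.single j 1)
      have hneg := hev i (Pi.single j (-1))
      rw [Finset.sum_eq_single j (fun k _ hk => by simp [hk]) (by simp)] at hpos hneg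
      simp only [Pi.single_eq_same, Pi.single_apply, mul_ite, mul_zero, Finset.sum_ite_eq',
        Finset.mem_univ, if_true] at hpos hneg
      have h0 := (mul_eq_zero.1 hpos).resolve_left hj
      have h1 := (mul_eq_zero.1 hneg).resolve_left hj
      refine (mul_eq_zero.1 (?_ : (2 : AlgebraicClosure (ZMod p)) * _ = 0)).resolve_left h2K
      linear_combination h0 - h1
    have hquad : ∀ j m, c j ≠ 0 → c m = 0 → α (embIdx N j) (embIdx N m) = 0 := by
      intro j m hj hm
      obtain ⟨h1, hN'⟩ := hlin j hj
      have hjm : j ≠ m := by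
        rintro rfl
        exact hj hm
      have h := hev ⟨0, by omega⟩ (Pi.single j 1 + Pi.single m 1)
      rw [Finset.sum_eq_single j (fun k _ hk => by
        by_cases hkm : k = m
        · simp [hkm, hm]
        · simp [hk, hkm]) (by simp)] at h
      have h' := (mul_eq_zero.1 h).resolve_left hj
      simp only [h1, hN', Pi.add_apply, Pi.single_eq_same, Pi.single_eq_of_ne hjm, zero_mul,
        add_zero, one_mul, sub_zero, Int.cast_zero, zero_add, mul_add, Pi.single_apply, mul_ite,
        mul_one, mul_zero, Finset.sum_add_distrib, Finset.sum_ite_eq', Finset.mem_univ, if_true,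
        hdiag] at h'
      refine int_eq_zero_of_cast p _ ?_ h'
      rcases hentries (embIdx N j) (embIdx N m) with e | e | e <;> rw [e] <;> simp <;> omega
    by_contra hne
    push Not at hne
    obtain ⟨j₀, hj₀⟩ := hne
    classical
    obtain ⟨i, hi, k, hk, hik⟩ := hirr ((Finset.univ.filter fun j => c j ≠ 0).image (embIdx N))
      ⟨embIdx N j₀, Finset.mem_image_of_mem _ (by simpa using hj₀)⟩ (by
        intro h
        have h0 := h ▸ Finset.mem_univ (oneIdx N j₀)
        obtain ⟨j, _, hj⟩ := Finset.mem_image.1 h0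
        simp [embIdx, oneIdx] at hj)
    obtain ⟨j, hj, rfl⟩ := Finset.mem_image.1 hi
    have hcj : c j ≠ 0 := (Finset.mem_filter.1 hj).2
    obtain ⟨h1, hN'⟩ := hlin j hcj
    by_cases hk0 : k.1 = 0
    · exact hik (by rwa [show k = oneIdx N j from Fin.ext hk0])
    by_cases hkN : k.1 = N - 1
    · exact hik (by rwa [show k = lastIdx N j from Fin.ext hkN])
    have hkm : k = embIdx N ⟨k.1 - 1, by omega⟩ := by
      apply Fin.ext
      simp only [embIdx]
      omega
    refine hik ?_
    rw [hkm]
    refine hquad j _ hcj ?_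
    by_contra hcm
    refine Finset.mem_compl.1 hk ?_
    rw [hkm]
    exact Finset.mem_image_of_mem _ (Finset.mem_filter.2 ⟨Finset.mem_univ _, hcm⟩)
  exact ⟨hli, fun j => hli.ne_zero j⟩
end
end
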